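/- Let n be a positive integer congruent to 2 modulo 4. Then the complex dimension of the diagonal coinvariant ring R_W of the Weyl group W(B_n) satisfies dim_ℂ R_W ≥ (2n+1)^n + n(n-6)/4 (note n(n-6) is divisible by 4 when n ≡ 2 mod 4). -/

import Mathlib

open MvPolynomial

/-- The action of the signed permutation `(ε, σ) ∈ W(Bₙ)` on the polynomial ring
`ℂ[x₁,…,xₙ,y₁,…,yₙ]`, sending `xᵢ ↦ εᵢ x_{σ(i)}` and `yᵢ ↦ εᵢ y_{σ(i)}`. -/
noncomputable def bAct (n : ℕ) (ε : Fin n → ℤˣ) (σ : Equiv.Perm (Fin n)) :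
    MvPolynomial (Fin n ⊕ Fin n) ℂ →ₐ[ℂ] MvPolynomial (Fin n ⊕ Fin n) ℂ :=
  aeval (Sum.elim
    (fun i => (((ε i : ℤ) : ℂ)) • X (Sum.inl (σ i)))
    (fun i => (((ε i : ℤ) : ℂ)) • X (Sum.inr (σ i))))

/-- The ideal `I_W` generated by the `W(Bₙ)`-invariant polynomials of positive degree
(equivalently, by the invariant polynomials with zero constant term). -/
noncomputable def diagIdeal (n : ℕ) : Ideal (MvPolynomial (Fin n ⊕ Fin n) ℂ) :=
  Ideal.span {f | (∀ ε σ, bAct n ε σ f = f) ∧ constantCoeff f = 0}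

/-
Let the polynomial ring act, for `N = 2n + 1`, on `(K[x]/(x^N))^{⊗n}` by normal ordering: `xᵢ` acts
by multiplication, `yᵢ` by a Dunkl operator, and the `x`s are put to the left. The alternant `w` of
the odd exponents `< N` generates this whole space, of dimension `(2n+1)^n`. Since the action is
multiplicative up to terms of lower degree, the leading forms of the polynomials killing `w` form an
ideal; an invariant polynomial acts on `w` by a scalar, so this ideal contains `I_W`, and
`dim R_W ≥ (2n+1)^n`.

The same holds for the product `w'` of the alternants of two blocks of `n/2` sites, except that one
lets the polynomials act on all the translates of `w'` at once. Hence `I_W` lies in both ideals of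
leading forms, and the bound from `w` improves by whatever `w'` detects and `w` does not. This is
measured on the polynomials of odd degree at every site that are invariant under the permutations
fixing one site: they produce vectors of even exponents, and if the difference of the degrees in `x`
and in `y` is suitably restricted, at least `n (n - 6) / 4` more of them from `w'` than from `w`.
-/

namespace DiagCoinv

open Module DirectSum

/-! ### Leading forms -/

section LeadingForms

variable {K A M M₁ M₂ : Type*} [Field K] [AddCommGroup A] [Module K A]
  [AddCommGroup M] [Module K M] [AddCommGroup M₁] [Module K M₁] [AddCommGroup M₂] [Module K M₂]

/-- The sum of the pieces of index `< L` of a family of subspaces. -/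
def lowerSum (B : ℕ → Submodule K A) (L : ℕ) : Submodule K A := (Finset.range L).sup B

/-- The space of leading forms of degree `m` of the kernel of `φ`: the `f` in the `m`-th piece for
which some `f - u`, with `u` in the sum of the lower pieces, lies in `ker φ`. -/
def leading (B : ℕ → Submodule K A) (φ : A →ₗ[K] M) (m : ℕ) : Submodule K A :=
  B m ⊓ ((lowerSum B m).map φ).comap φ

lemma lowerSum_zero (B : ℕ → Submodule K A) : lowerSum B 0 = ⊥ := rfl

lemma lowerSum_succ (B : ℕ → Submodule K A) (L : ℕ) :
    lowerSum B (L + 1) = lowerSum B L ⊔ B L := by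
  rw [lowerSum, Finset.range_add_one, Finset.sup_insert, sup_comm, lowerSum]

lemma lowerSum_mono (B : ℕ → Submodule K A) : Monotone (lowerSum B) :=
  fun _ _ h => Finset.sup_mono (Finset.range_mono h)

lemma lowerSum_le_lowerSum {B C : ℕ → Submodule K A} (h : ∀ m, C m ≤ B m) (L : ℕ) :
    lowerSum C L ≤ lowerSum B L :=
  Finset.sup_mono_fun fun m _ => h m

lemma le_lowerSum (B : ℕ → Submodule K A) {m L : ℕ} (h : m < L) : B m ≤ lowerSum B L :=
  Finset.le_sup (Finset.mem_range.2 h)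

lemma iSup_lowerSum (B : ℕ → Submodule K A) : ⨆ L, lowerSum B L = ⨆ m, B m :=
  le_antisymm (iSup_le fun _ => Finset.sup_le fun m _ => le_iSup B m)
    (iSup_le fun m => (le_lowerSum B m.lt_succ_self).trans (le_iSup (lowerSum B) _))

lemma exists_lowerSum_map_eq [FiniteDimensional K M] (B : ℕ → Submodule K A) (φ : A →ₗ[K] M) :
    ∃ L₀, ∀ L, L₀ ≤ L → (lowerSum B L).map φ = (⨆ m, B m).map φ := by
  let images : ℕ →o Submodule K M :=
    ⟨fun L => (lowerSum B L).map φ, fun _ _ h => Submodule.map_mono (lowerSum_mono B h)⟩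
  obtain ⟨L₀, hL₀⟩ := WellFoundedGT.monotone_chain_condition images
  refine ⟨L₀, fun L hL => ?_⟩
  rw [← iSup_lowerSum, Submodule.map_iSup]
  refine le_antisymm (le_iSup (fun L => (lowerSum B L).map φ) L) (iSup_le fun L' => ?_)
  calc (lowerSum B L').map φ ≤ images (max L L') := images.monotone (le_max_right L L')
    _ = images L := (hL₀ _ (hL.trans (le_max_left L L'))).symm.trans (hL₀ L hL)

lemma finrank_map_add_finrank_inf_ker (p : Submodule K A) [FiniteDimensional K p]
    (φ : A →ₗ[K] M) :
    finrank K (p.map φ) + finrank K (p ⊓ LinearMap.ker φ : Submodule K A) = finrank K p := by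
  have h := LinearMap.finrank_range_add_finrank_ker (φ.domRestrict p)
  rw [LinearMap.range_domRestrict, LinearMap.ker_domRestrict] at h
  rwa [← Submodule.map_comap_subtype, Submodule.finrank_map_subtype_eq]

lemma leading_inf_ker (B : ℕ → Submodule K A) (φ : A →ₗ[K] M) (m : ℕ) :
    leading B φ m ⊓ LinearMap.ker φ = B m ⊓ LinearMap.ker φ := by
  have h : LinearMap.ker φ ≤ ((lowerSum B m).map φ).comap φ := Submodule.comap_mono bot_le
  rw [leading, inf_assoc, inf_eq_right.2 h]

lemma map_leading (B : ℕ → Submodule K A) (φ : A →ₗ[K] M) (m : ℕ) :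
    (leading B φ m).map φ = (lowerSum B m).map φ ⊓ (B m).map φ := by
  rw [leading, ← Submodule.map_inf_eq_map_inf_comap, inf_comm]

lemma leading_le_leading {B C : ℕ → Submodule K A} (h : ∀ m, C m ≤ B m) (φ : A →ₗ[K] M) (m : ℕ) :
    leading C φ m ≤ leading B φ m :=
  inf_le_inf (h m) (Submodule.comap_mono (Submodule.map_mono (lowerSum_le_lowerSum h m)))

lemma inf_leading_le_leading_of_projection {B C : ℕ → Submodule K A} {φ : A →ₗ[K] M}
    (P : A →ₗ[K] A) (hPB : ∀ m, B m ≤ (C m).comap P) (hPC : ∀ m, ∀ f ∈ C m, P f = f)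
    (hker : ∀ f, φ f = 0 → φ (P f) = 0) (m : ℕ) :
    C m ⊓ leading B φ m ≤ leading C φ m := by
  rintro f ⟨hfC, -, u, hu, huf⟩
  refine ⟨hfC, P u, ?_, ?_⟩
  · have h : lowerSum B m ≤ (lowerSum C m).comap P := Finset.sup_le fun j hj =>
      (hPB j).trans (Submodule.comap_mono (le_lowerSum C (Finset.mem_range.1 hj)))
    exact h hu
  · have h := hker (u - f) (by rw [map_sub, huf, sub_self])
    rwa [map_sub, map_sub, hPC m f hfC, sub_eq_zero] at h

section Finrank

variable (B C : ℕ → Submodule K A) [∀ m, FiniteDimensional K (B m)]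

instance finiteDimensional_lowerSum (L : ℕ) : FiniteDimensional K (lowerSum B L) :=
  Submodule.finiteDimensional_finset_sup _ _

instance finiteDimensional_leading (φ : A →ₗ[K] M) (m : ℕ) :
    FiniteDimensional K (leading B φ m) :=
  Submodule.finiteDimensional_inf_left _ _

lemma finrank_map_lowerSum_add_sum_finrank_leading (φ : A →ₗ[K] M) (L : ℕ) :
    finrank K ((lowerSum B L).map φ) + ∑ m ∈ Finset.range L, finrank K (leading B φ m)
      = ∑ m ∈ Finset.range L, finrank K (B m) := by
  induction L with
  | zero => rw [lowerSum_zero, Submodule.map_bot, finrank_bot, Finset.range_zero,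
      Finset.sum_empty, Finset.sum_empty, add_zero]
  | succ L ih =>
    have hsup := Submodule.finrank_sup_add_finrank_inf_eq ((lowerSum B L).map φ) ((B L).map φ)
    have hB := finrank_map_add_finrank_inf_ker (B L) φ
    have hlead := finrank_map_add_finrank_inf_ker (leading B φ L) φ
    rw [leading_inf_ker, map_leading] at hlead
    rw [← Submodule.map_sup, ← lowerSum_succ] at hsup
    rw [Finset.sum_range_succ, Finset.sum_range_succ, ← ih]
    omega

variable {B C} {φ₁ : A →ₗ[K] M₁} {φ₂ : A →ₗ[K] M₂}

lemma finrank_leading_add_finrank_inf_le (hCB : ∀ m, C m ≤ B m)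
    (hC : ∀ m, C m ⊓ leading B φ₂ m ≤ leading C φ₂ m) (m : ℕ) :
    finrank K (leading C φ₁ m) + finrank K (leading B φ₁ m ⊓ leading B φ₂ m : Submodule K A) ≤
      finrank K (leading B φ₁ m) + finrank K (leading C φ₂ m) := by
  have : ∀ m, FiniteDimensional K (C m) := fun m => Submodule.finiteDimensional_of_le (hCB m)
  rw [← Submodule.finrank_sup_add_finrank_inf_eq]
  refine add_le_add (Submodule.finrank_mono (sup_le (leading_le_leading hCB φ₁ m) inf_le_left))
    (Submodule.finrank_mono (le_trans ?_ (hC m)))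
  exact inf_le_inf inf_le_left inf_le_right

lemma finrank_map_lowerSum_add_le (hCB : ∀ m, C m ≤ B m)
    (hC : ∀ m, C m ⊓ leading B φ₂ m ≤ leading C φ₂ m) (L : ℕ) :
    finrank K ((lowerSum B L).map φ₁) + finrank K ((lowerSum C L).map φ₂) +
        ∑ m ∈ Finset.range L, finrank K (leading B φ₁ m ⊓ leading B φ₂ m : Submodule K A) ≤
      ∑ m ∈ Finset.range L, finrank K (B m) + finrank K ((lowerSum C L).map φ₁) := by
  have : ∀ m, FiniteDimensional K (C m) := fun m => Submodule.finiteDimensional_of_le (hCB m)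
  have hB := finrank_map_lowerSum_add_sum_finrank_leading B φ₁ L
  have hC₁ := finrank_map_lowerSum_add_sum_finrank_leading C φ₁ L
  have hC₂ := finrank_map_lowerSum_add_sum_finrank_leading C φ₂ L
  have hsum := Finset.sum_le_sum fun m (_ : m ∈ Finset.range L) =>
    finrank_leading_add_finrank_inf_le (φ₁ := φ₁) hCB hC m
  rw [Finset.sum_add_distrib, Finset.sum_add_distrib] at hsum
  omega

end Finrank

section Decomposition

variable {B : ℕ → Submodule K A} [Decomposition B]

lemma sum_finrank_le_finrank_quotient_add [∀ m, FiniteDimensional K (B m)]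
    {I : Submodule K A} [FiniteDimensional K (A ⧸ I)] {J : ℕ → Submodule K A}
    (hJ : ∀ m, J m ≤ B m) (hI : ∀ f ∈ I, ∀ m, (decompose B f m : A) ∈ J m) (L : ℕ) :
    ∑ m ∈ Finset.range L, finrank K (B m) ≤
      finrank K (A ⧸ I) + ∑ m ∈ Finset.range L, finrank K (J m) := by
  let J' (m : Fin L) : Submodule K (B m) := (J m).submoduleOf (B m)
  let toPieces : A →ₗ[K] ∀ m : Fin L, B m ⧸ J' m := LinearMap.pi fun m =>
    (J' m).mkQ ∘ₗ DirectSum.component K ℕ (fun m => B m) m ∘ₗ (decomposeLinearEquiv B).toLinearMap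
  have hsurj : Function.Surjective toPieces := by
    intro q
    choose r hr using fun m => (J' m).mkQ_surjective (q m)
    refine ⟨∑ m, (r m : A), funext fun m => (congrArg _ ?_).trans (hr m)⟩
    change decompose B (∑ m, (r m : A)) m = r m
    rw [decompose_sum, DFinsupp.finsetSum_apply, Finset.sum_eq_single m]
    · rw [decompose_coe, of_eq_same]
    · intro b _ hb
      rw [decompose_coe, of_eq_of_ne _ _ _ (Fin.val_ne_of_ne hb.symm)]
    · simp
  have hker : I ≤ LinearMap.ker toPieces := fun f hf => LinearMap.mem_ker.2 <| funext fun m =>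
    (Submodule.Quotient.mk_eq_zero (J' m)).2 (hI f hf m)
  have hle := LinearMap.finrank_le_finrank_of_surjective (f := I.liftQ toPieces hker)
    (fun q => (hsurj q).imp' Submodule.Quotient.mk fun _ h => h)
  have hpiece (m : Fin L) : finrank K (B m) = finrank K (B m ⧸ J' m) + finrank K (J m) := by
    rw [← (J' m).finrank_quotient_add_finrank,
      (Submodule.submoduleOfEquivOfLe (hJ m)).finrank_eq]
  rw [Module.finrank_pi_fintype] at hle
  rw [Finset.sum_range, Finset.sum_range, Finset.sum_congr rfl fun m _ => hpiece m,
    Finset.sum_add_distrib]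
  exact Nat.add_le_add_right hle _

lemma iSup_inf_piece_eq {Q : Submodule K A} (hQ : ∀ f ∈ Q, ∀ m, (decompose B f m : A) ∈ Q) :
    ⨆ m, Q ⊓ B m = Q := by
  classical
  refine le_antisymm (iSup_le fun m => inf_le_left) fun f hf => ?_
  rw [← sum_support_decompose B f]
  exact Submodule.sum_mem _ fun m _ =>
    Submodule.mem_iSup_of_mem m ⟨hQ f hf m, (decompose B f m).2⟩

/-- The degeneration `A / I → φ₁(A)` loses at least what `φ₂` sees and `φ₁` misses on `Q`. -/
theorem finrank_range_add_finrank_map_le [∀ m, FiniteDimensional K (B m)]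
    {I Q : Submodule K A} [FiniteDimensional K (A ⧸ I)]
    {φ₁ : A →ₗ[K] M₁} {φ₂ : A →ₗ[K] M₂} [FiniteDimensional K M₁] [FiniteDimensional K M₂]
    (h₁ : ∀ f ∈ I, ∀ m, (decompose B f m : A) ∈ leading B φ₁ m)
    (h₂ : ∀ f ∈ I, ∀ m, (decompose B f m : A) ∈ leading B φ₂ m)
    (hQ : ∀ f ∈ Q, ∀ m, (decompose B f m : A) ∈ Q)
    (hQ₂ : ∀ m, (Q ⊓ B m) ⊓ leading B φ₂ m ≤ leading (fun m => Q ⊓ B m) φ₂ m) :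
    finrank K (LinearMap.range φ₁) + finrank K (Q.map φ₂) ≤
      finrank K (A ⧸ I) + finrank K (Q.map φ₁) := by
  obtain ⟨L₁, hL₁⟩ := exists_lowerSum_map_eq B φ₁
  obtain ⟨L₂, hL₂⟩ := exists_lowerSum_map_eq (fun m => Q ⊓ B m) φ₂
  let L := max L₁ L₂
  have hrange := hL₁ L (le_max_left _ _)
  have hmap := hL₂ L (le_max_right _ _)
  rw [(Decomposition.isInternal B).submodule_iSup_eq_top, Submodule.map_top] at hrange
  rw [iSup_inf_piece_eq hQ] at hmap
  have hmap₁ : finrank K ((lowerSum (fun m => Q ⊓ B m) L).map φ₁) ≤ finrank K (Q.map φ₁) :=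
    Submodule.finrank_mono (Submodule.map_mono (Finset.sup_le fun m _ => inf_le_left))
  have hlead := finrank_map_lowerSum_add_le (φ₁ := φ₁) (fun m => inf_le_right) hQ₂ L
  have hquot := sum_finrank_le_finrank_quotient_add
    (J := fun m => leading B φ₁ m ⊓ leading B φ₂ m) (fun m => inf_le_left.trans inf_le_left)
    (fun f hf m => Submodule.mem_inf.2 ⟨h₁ f hf m, h₂ f hf m⟩) L
  rw [hrange, hmap] at hlead
  omega

end Decomposition

end LeadingForms

/-! ### The truncated Dunkl operator at one site -/

section SingleSite

variable (K : Type*) [Field K] (N : ℕ)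

/-- Multiplication by `x` on the truncated polynomials `K[x]/(x^N)`, in the basis `x^j`. -/
def mulX : Matrix (Fin N) (Fin N) K := Matrix.of fun i j => if (i : ℕ) = j + 1 then 1 else 0

/-- The Dunkl operator `p ↦ p' - N (p(x) - p(-x)) / 2x` sends `x^j` to `dunklCoeff K N j • x^(j-1)`.
At this value of the parameter it vanishes on `x^N` for odd `N`, so it acts on `K[x]/(x^N)`. -/
def dunklCoeff (j : ℕ) : K := if Even j then (j : K) else (j : K) - N

/-- The Dunkl operator on `K[x]/(x^N)`. -/
def dunkl : Matrix (Fin N) (Fin N) K :=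
  Matrix.of fun i j => if (j : ℕ) = i + 1 then dunklCoeff K N j else 0

/-- The operator `p(x) ↦ p(-x)` on `K[x]/(x^N)`. -/
def parity : Matrix (Fin N) (Fin N) K := Matrix.diagonal fun j => (-1) ^ (j : ℕ)

/-- The coefficient of the lower term when the Dunkl operator is moved past `X^a D^b` on vectors
of odd parity. -/
def loweringCoeff (a b : ℕ) : K := a + if Odd a then (-1) ^ b * (N : K) else 0

variable {K N}

lemma mulX_apply (i j : Fin N) : mulX K N i j = if (i : ℕ) = j + 1 then 1 else 0 := rfl

lemma dunkl_apply (i j : Fin N) :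
    dunkl K N i j = if (j : ℕ) = i + 1 then dunklCoeff K N j else 0 := rfl

lemma dunklCoeff_ne_zero [CharZero K] {j : ℕ} (h₀ : 0 < j) (h : j < N) : dunklCoeff K N j ≠ 0 := by
  unfold dunklCoeff
  split_ifs
  · exact_mod_cast h₀.ne'
  · rw [sub_ne_zero]
    exact_mod_cast h.ne

lemma dunklCoeff_succ_sub (j : ℕ) :
    dunklCoeff K N (j + 1) - dunklCoeff K N j = 1 - N * (-1) ^ j := by
  rcases Nat.even_or_odd j with h | h
  · rw [dunklCoeff, dunklCoeff, if_neg (by simpa [Nat.even_add_one] using h), if_pos h,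
      h.neg_one_pow]
    push_cast
    ring
  · rw [dunklCoeff, dunklCoeff, if_pos h.add_one, if_neg (Nat.not_even_iff_odd.2 h),
      h.neg_one_pow]
    push_cast
    ring

lemma mulX_mul_dunkl :
    mulX K N * dunkl K N = Matrix.diagonal fun j : Fin N => dunklCoeff K N j := by
  ext i j
  rw [Matrix.mul_apply, Matrix.diagonal_apply]
  rcases Nat.eq_zero_or_pos (i : ℕ) with hi | hi
  · rw [Finset.sum_eq_zero fun l _ => by simp [mulX_apply, hi]]
    simp [hi, dunklCoeff]
  · rw [Finset.sum_eq_single (⟨i - 1, by omega⟩ : Fin N)]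
    · have h1 : (i : ℕ) - 1 + 1 = i := Nat.sub_add_cancel hi
      have h2 : (j : ℕ) = i ↔ i = j := by rw [Fin.ext_iff, eq_comm]
      simp only [mulX_apply, dunkl_apply, h1, if_true, one_mul, h2]
      exact ite_congr rfl (fun h => by rw [h]) fun _ => rfl
    · intro l _ hl
      have : (i : ℕ) ≠ l + 1 := fun h => hl (Fin.ext (by simp only; omega))
      simp [mulX_apply, this]
    · simp

lemma dunkl_mul_mulX_eq_diagonal (hN : Odd N) :
    dunkl K N * mulX K N = Matrix.diagonal fun j : Fin N => dunklCoeff K N (j + 1) := by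
  ext i j
  rw [Matrix.mul_apply, Matrix.diagonal_apply]
  by_cases hi : (i : ℕ) + 1 < N
  · rw [Finset.sum_eq_single (⟨i + 1, hi⟩ : Fin N)]
    · simp [dunkl_apply, mulX_apply, Fin.ext_iff]
    · intro l _ hl
      have : (l : ℕ) ≠ i + 1 := fun h => hl (Fin.ext h)
      simp [dunkl_apply, this]
    · simp
  · have hi' : (i : ℕ) + 1 = N := by omega
    rw [hi', dunklCoeff, if_neg (Nat.not_even_iff_odd.2 hN), sub_self, ite_self]
    refine Finset.sum_eq_zero fun l _ => ?_
    have : (l : ℕ) ≠ i + 1 := by omega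
    simp [dunkl_apply, this]

lemma dunkl_mul_mulX (hN : Odd N) :
    dunkl K N * mulX K N = mulX K N * dunkl K N + 1 - (N : K) • parity K N := by
  rw [mulX_mul_dunkl, dunkl_mul_mulX_eq_diagonal hN, parity, ← Matrix.diagonal_one,
    ← Matrix.diagonal_smul, Matrix.diagonal_add, Matrix.diagonal_sub]
  congr 1
  ext j
  simp only [Pi.smul_apply, smul_eq_mul]
  linear_combination dunklCoeff_succ_sub (K := K) (N := N) j

lemma parity_mul_mulX : parity K N * mulX K N = -(mulX K N * parity K N) := by
  ext i j
  rw [parity, Matrix.neg_apply, Matrix.diagonal_mul, Matrix.mul_diagonal, mulX_apply]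
  split_ifs with h
  · rw [h, pow_succ]
    ring
  · simp

lemma parity_mul_dunkl : parity K N * dunkl K N = -(dunkl K N * parity K N) := by
  ext i j
  rw [parity, Matrix.neg_apply, Matrix.diagonal_mul, Matrix.mul_diagonal, dunkl_apply]
  split_ifs with h
  · rw [h, pow_succ]
    ring
  · simp

lemma parity_mul_dunkl_pow (b : ℕ) :
    parity K N * dunkl K N ^ b = (-1 : K) ^ b • (dunkl K N ^ b * parity K N) := by
  induction b with
  | zero => simp
  | succ b ih =>
    rw [pow_succ, ← mul_assoc, ih, smul_mul_assoc, mul_assoc, parity_mul_dunkl, mul_neg, smul_neg,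
      pow_succ (-1 : K), mul_neg_one, neg_smul, mul_assoc]

lemma dunkl_mul_mulX_pow_succ (hN : Odd N) (a : ℕ) :
    dunkl K N * mulX K N ^ (a + 1) = mulX K N ^ (a + 1) * dunkl K N +
      ((a + 1 : ℕ) : K) • mulX K N ^ a - (if Even a then (N : K) else 0) •
        (mulX K N ^ a * parity K N) := by
  induction a with
  | zero => simp [dunkl_mul_mulX hN]
  | succ a ih =>
    have hcoeff : (if Even (a + 1) then (N : K) else 0) = N - if Even a then (N : K) else 0 := by
      by_cases h : Even a <;> simp [h, Nat.even_add_one]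
    rw [pow_succ, ← mul_assoc, ih, hcoeff, sub_mul, add_mul, mul_assoc, dunkl_mul_mulX hN,
      smul_mul_assoc, smul_mul_assoc, mul_assoc (mulX K N ^ a), parity_mul_mulX,
      Nat.cast_succ (a + 1)]
    simp only [mul_add, mul_sub, mul_one, mul_neg, smul_neg, add_smul, sub_smul, one_smul,
      ← mul_assoc, ← pow_succ, mul_smul_comm]
    abel

lemma dunkl_mul_mulX_pow_succ_mul_dunkl_pow (hN : Odd N) (a b : ℕ) :
    dunkl K N * (mulX K N ^ (a + 1) * dunkl K N ^ b) =
      mulX K N ^ (a + 1) * dunkl K N ^ (b + 1) +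
        ((a + 1 : ℕ) : K) • (mulX K N ^ a * dunkl K N ^ b) -
        ((if Even a then (N : K) else 0) * (-1) ^ b) •
          (mulX K N ^ a * dunkl K N ^ b * parity K N) := by
  rw [← mul_assoc, dunkl_mul_mulX_pow_succ hN, sub_mul, add_mul, mul_assoc, ← pow_succ',
    smul_mul_assoc, smul_mul_assoc, mul_assoc (mulX K N ^ a) (parity K N), parity_mul_dunkl_pow,
    mul_smul_comm, smul_smul, mul_assoc (mulX K N ^ a) _ (parity K N)]

lemma loweringCoeff_zero (b : ℕ) : loweringCoeff K N 0 b = 0 := by simp [loweringCoeff]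

lemma loweringCoeff_succ (a b : ℕ) : loweringCoeff K N (a + 1) b =
    ((a + 1 : ℕ) : K) + (if Even a then (N : K) else 0) * (-1) ^ b := by
  by_cases h : Even a <;> simp [loweringCoeff, h, Nat.odd_add_one, mul_comm]

lemma mulX_pow_apply (a : ℕ) (i j : Fin N) :
    (mulX K N ^ a) i j = if (i : ℕ) = j + a then 1 else 0 := by
  induction a generalizing i with
  | zero => simp [Matrix.one_apply, Fin.ext_iff]
  | succ a ih =>
    rw [pow_succ', Matrix.mul_apply]
    simp only [ih, mulX_apply, mul_ite, mul_one, mul_zero, ← ite_and]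
    split_ifs with h
    · rw [Finset.sum_eq_single (⟨j + a, by omega⟩ : Fin N)]
      · rw [if_pos ⟨rfl, by simp only; omega⟩]
      · intro l _ hl
        exact if_neg fun hl' => hl (Fin.ext hl'.1)
      · simp
    · exact Finset.sum_eq_zero fun l _ => if_neg fun hl => h (by omega)

lemma dunkl_pow_apply (b : ℕ) (i j : Fin N) :
    (dunkl K N ^ b) i j =
      if (j : ℕ) = i + b then ∏ t ∈ Finset.range b, dunklCoeff K N (i + t + 1) else 0 := by
  induction b generalizing j with
  | zero => simp [Matrix.one_apply, Fin.ext_iff, eq_comm]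
  | succ b ih =>
    rw [pow_succ, Matrix.mul_apply]
    simp only [ih, dunkl_apply, mul_ite, mul_zero, ite_mul, zero_mul, ← ite_and]
    split_ifs with h
    · rw [Finset.sum_eq_single (⟨i + b, by omega⟩ : Fin N)]
      · rw [if_pos ⟨by simp only; omega, rfl⟩, Finset.prod_range_succ, h, add_assoc]
      · intro l _ hl
        exact if_neg fun hl' => hl (Fin.ext hl'.2)
      · simp
    · exact Finset.sum_eq_zero fun l _ => if_neg fun hl => h (by omega)

lemma mulX_pow_mul_dunkl_pow_apply (a b : ℕ) (i j : Fin N) :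
    (mulX K N ^ a * dunkl K N ^ b) i j = ∑ l : Fin N,
      if (i : ℕ) = l + a ∧ (j : ℕ) = l + b
        then ∏ t ∈ Finset.range b, dunklCoeff K N (l + t + 1) else 0 := by
  simp only [Matrix.mul_apply, mulX_pow_apply, dunkl_pow_apply, ite_and, ite_mul, one_mul,
    zero_mul]

lemma exists_of_mulX_pow_mul_dunkl_pow_apply_ne_zero {a b : ℕ} {i j : Fin N}
    (h : (mulX K N ^ a * dunkl K N ^ b) i j ≠ 0) :
    ∃ l : ℕ, (i : ℕ) = l + a ∧ (j : ℕ) = l + b := by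
  rw [mulX_pow_mul_dunkl_pow_apply] at h
  obtain ⟨l, -, hl⟩ := Finset.exists_ne_zero_of_sum_ne_zero h
  exact ⟨l, (ite_ne_right_iff.1 hl).1⟩

lemma mulX_pow_mul_dunkl_pow_apply_self_ne_zero [CharZero K] (r s : Fin N) :
    (mulX K N ^ (r : ℕ) * dunkl K N ^ (s : ℕ)) r s ≠ 0 := by
  rw [mulX_pow_mul_dunkl_pow_apply, Finset.sum_eq_single (⟨0, r.pos⟩ : Fin N)]
  · rw [if_pos ⟨(zero_add _).symm, (zero_add _).symm⟩, Finset.prod_ne_zero_iff]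
    intro t ht
    have := Finset.mem_range.1 ht
    exact dunklCoeff_ne_zero (Nat.succ_pos _) (by simp only; omega)
  · intro l _ hl
    exact if_neg fun h => hl (Fin.ext (by simp only; omega))
  · simp

variable (K N) in
/-- The span of the operators `X^a D^b` with `a, b < N`. -/
def normalSpan : Submodule K (Matrix (Fin N) (Fin N) K) :=
  Submodule.span K (Set.range fun p : Fin N × Fin N => mulX K N ^ (p.1 : ℕ) * dunkl K N ^ (p.2 : ℕ))

/- `X^r D^s` is a nonzero multiple of `single r s 1` plus units `single i j 1` with `s < j`. -/
lemma single_mem_normalSpan_of_forall_gt [CharZero K] (r s : Fin N)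
    (ih : ∀ j, s < j → ∀ i, Matrix.single i j (1 : K) ∈ normalSpan K N) :
    Matrix.single r s (1 : K) ∈ normalSpan K N := by
  set T := mulX K N ^ (r : ℕ) * dunkl K N ^ (s : ℕ)
  have hTmem : T ∈ normalSpan K N := Submodule.subset_span ⟨(r, s), rfl⟩
  have hsum : T = ∑ p : Fin N × Fin N, T p.1 p.2 • Matrix.single p.1 p.2 (1 : K) := by
    conv_lhs => rw [Matrix.matrix_eq_sum_single T]
    simp [Fintype.sum_prod_type]
  rw [← Finset.add_sum_erase _ _ (Finset.mem_univ (r, s))] at hsum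
  have hrest : ∑ p ∈ (Finset.univ : Finset (Fin N × Fin N)).erase (r, s),
      T p.1 p.2 • Matrix.single p.1 p.2 (1 : K) ∈ normalSpan K N := by
    refine Submodule.sum_mem _ fun p hp => ?_
    by_cases hz : T p.1 p.2 = 0
    · rw [hz, zero_smul]
      exact Submodule.zero_mem _
    · obtain ⟨l, hr, hs⟩ := exists_of_mulX_pow_mul_dunkl_pow_apply_ne_zero hz
      have hl : l ≠ 0 := fun hl => Finset.ne_of_mem_erase hp
        (Prod.ext (Fin.ext (by simpa [hl] using hr)) (Fin.ext (by simpa [hl] using hs)))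
      exact Submodule.smul_mem _ _ (ih p.2 (Fin.lt_def.2 (by omega)) p.1)
  have hlead : T r s • Matrix.single r s (1 : K) ∈ normalSpan K N := by
    rw [hsum] at hTmem
    exact (Submodule.add_mem_iff_left _ hrest).1 hTmem
  exact (Submodule.smul_mem_iff _ (mulX_pow_mul_dunkl_pow_apply_self_ne_zero r s)).1 hlead

lemma single_mem_normalSpan [CharZero K] (r s : Fin N) :
    Matrix.single r s (1 : K) ∈ normalSpan K N := by
  induction s using WellFoundedGT.induction generalizing r with
  | ind s ih => exact single_mem_normalSpan_of_forall_gt r s ih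

end SingleSite

section IdealLeading

variable {K σ M : Type*} [Field K] [AddCommGroup M] [Module K M]

instance finiteDimensional_homogeneousSubmodule [Finite σ] (m : ℕ) :
    FiniteDimensional K (homogeneousSubmodule σ K m) :=
  Submodule.finiteDimensional_of_le (S₂ := restrictTotalDegree σ K m) fun _ hp =>
    (mem_restrictTotalDegree _ _ _).2 (IsHomogeneous.totalDegree_le hp)

lemma lowerSum_homogeneousSubmodule (L : ℕ) :
    lowerSum (homogeneousSubmodule σ K) L = restrictSupport K {d | d.degree < L} := by
  refine le_antisymm (Finset.sup_le fun m hm => ?_) ?_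
  · rw [homogeneousSubmodule_eq_finsupp_supported]
    exact restrictSupport_mono K fun d (hd : d.degree = m) => hd.trans_lt (Finset.mem_range.1 hm)
  · rw [restrictSupport_eq_span, Submodule.span_le]
    rintro _ ⟨d, hd, rfl⟩
    exact le_lowerSum _ hd (isHomogeneous_monomial 1 rfl)

lemma constr_basisMonomials_monomial (F : (σ →₀ ℕ) → M) (d : σ →₀ ℕ) (c : K) :
    (basisMonomials σ K).constr K F (monomial d c) = c • F d := by
  have h : monomial d c = c • basisMonomials σ K d := by
    rw [coe_basisMonomials, smul_monomial, smul_eq_mul, mul_one]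
  rw [h, map_smul, Basis.constr_basis]

lemma homogeneousComponent_succ_X_mul (j : σ) (f : MvPolynomial σ K) (m : ℕ) :
    homogeneousComponent (m + 1) (X j * f) = X j * homogeneousComponent m f := by
  induction f using MvPolynomial.induction_on' with
  | monomial d c =>
    have h₀ : (monomial d c).IsHomogeneous d.degree := isHomogeneous_monomial c rfl
    have h₁ : (X j * monomial d c).IsHomogeneous (d.degree + 1) := by
      rw [add_comm]
      exact (isHomogeneous_X K j).mul h₀
    rw [homogeneousComponent_of_mem h₀, homogeneousComponent_of_mem h₁]
    by_cases h : m = d.degree <;> simp [h]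
  | add p q hp hq => rw [mul_add, map_add, map_add, hp, hq, mul_add]

lemma homogeneousComponent_zero_X_mul (j : σ) (f : MvPolynomial σ K) :
    homogeneousComponent 0 (X j * f) = 0 := by
  rw [homogeneousComponent_zero, ← constantCoeff_eq, map_mul, constantCoeff_X, zero_mul, C_0]

lemma X_mul_mem_lowerSum (j : σ) {f : MvPolynomial σ K} {L : ℕ}
    (hf : f ∈ lowerSum (homogeneousSubmodule σ K) L) :
    X j * f ∈ lowerSum (homogeneousSubmodule σ K) (L + 1) := by
  have h : lowerSum (homogeneousSubmodule σ K) L ≤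
      (lowerSum (homogeneousSubmodule σ K) (L + 1)).comap (LinearMap.mulLeft K (X j)) :=
    Finset.sup_le fun m hm f hf => le_lowerSum _ (Nat.succ_lt_succ (Finset.mem_range.1 hm)) <| by
      rw [Nat.succ_eq_one_add]
      exact (isHomogeneous_X K j).mul hf
  exact h hf

/-- The polynomials all of whose homogeneous components are leading forms of `ker φ`. -/
noncomputable def leadingPolynomials (φ : MvPolynomial σ K →ₗ[K] M) :
    Submodule K (MvPolynomial σ K) :=
  ⨅ m, (leading (homogeneousSubmodule σ K) φ m).comap (homogeneousComponent m)

lemma mem_leadingPolynomials {φ : MvPolynomial σ K →ₗ[K] M} {f : MvPolynomial σ K} :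
    f ∈ leadingPolynomials φ ↔
      ∀ m, homogeneousComponent m f ∈ leading (homogeneousSubmodule σ K) φ m := by
  simp only [leadingPolynomials, Submodule.mem_iInf, Submodule.mem_comap]

lemma X_mul_mem_leadingPolynomials {φ : MvPolynomial σ K →ₗ[K] M} {j : σ} {T : M →ₗ[K] M}
    {E : MvPolynomial σ K →ₗ[K] MvPolynomial σ K}
    (hE : ∀ L, lowerSum (homogeneousSubmodule σ K) L ≤
      (lowerSum (homogeneousSubmodule σ K) L).comap E)
    (hT : ∀ f, T (φ f) = φ (X j * f) + φ (E f)) {f : MvPolynomial σ K}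
    (hf : f ∈ leadingPolynomials φ) : X j * f ∈ leadingPolynomials φ := by
  rw [mem_leadingPolynomials] at hf ⊢
  rintro (_ | m)
  · rw [homogeneousComponent_zero_X_mul]
    exact Submodule.zero_mem _
  obtain ⟨hhom, u, hu, huf⟩ := hf m
  rw [homogeneousComponent_succ_X_mul]
  set g := homogeneousComponent m f
  refine ⟨by rw [add_comm]; exact (isHomogeneous_X K j).mul hhom, X j * u + E u - E g, ?_, ?_⟩
  · have hu' := lowerSum_mono (homogeneousSubmodule σ K) m.le_succ hu
    exact Submodule.sub_mem _ (Submodule.add_mem _ (X_mul_mem_lowerSum j hu) (hE _ hu'))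
      (hE _ (le_lowerSum _ m.lt_succ_self hhom))
  · rw [map_sub, map_add, ← hT, huf, hT, add_sub_cancel_right]

lemma mul_mem_of_forall_X_mul_mem {P : Submodule K (MvPolynomial σ K)}
    (hP : ∀ j, ∀ f ∈ P, X j * f ∈ P) (g : MvPolynomial σ K) {f : MvPolynomial σ K} (hf : f ∈ P) :
    g * f ∈ P := by
  induction g using MvPolynomial.induction_on with
  | C c =>
    rw [C_mul']
    exact P.smul_mem c hf
  | add p q hp hq =>
    rw [add_mul]
    exact P.add_mem hp hq
  | mul_X p j hp =>
    rw [mul_comm p, mul_assoc]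
    exact hP j _ hp

lemma mem_of_mem_ideal_span {P : Submodule K (MvPolynomial σ K)}
    (hP : ∀ j, ∀ f ∈ P, X j * f ∈ P) {s : Set (MvPolynomial σ K)} (hs : s ⊆ P)
    {f : MvPolynomial σ K} (hf : f ∈ Ideal.span s) : f ∈ P := by
  induction hf using Submodule.span_induction with
  | mem f hf => exact hs hf
  | zero => exact P.zero_mem
  | add f g _ _ hf hg => exact P.add_mem hf hg
  | smul g f _ hf => exact mul_mem_of_forall_X_mul_mem hP g hf

end IdealLeading

section Sites

variable {K ι n : Type*} [Field K] [Fintype ι]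

variable (K ι n) in
/-- The Kronecker product of matrices, one for each site `i : ι`. -/
def siteKron : MultilinearMap K (fun _ : ι => Matrix n n K) (Matrix (ι → n) (ι → n) K) :=
  MultilinearMap.pi fun e => MultilinearMap.pi fun e' =>
    (MultilinearMap.mkPiAlgebra K ι K).compLinearMap fun i =>
      Matrix.entryLinearMap K K (e i) (e' i)

lemma siteKron_apply (A : ι → Matrix n n K) (e e' : ι → n) :
    siteKron K ι n A e e' = ∏ i, A i (e i) (e' i) := rfl

lemma siteKron_mul [DecidableEq ι] [Fintype n] (A B : ι → Matrix n n K) :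
    siteKron K ι n A * siteKron K ι n B = siteKron K ι n (A * B) := by
  ext e e'
  simp only [Matrix.mul_apply, siteKron_apply, Pi.mul_apply, Finset.prod_univ_sum,
    Finset.prod_mul_distrib, Fintype.piFinset_univ]

lemma siteKron_mulSingle_mul [DecidableEq ι] [Fintype n] [DecidableEq n] (i : ι)
    (T : Matrix n n K) (A : ι → Matrix n n K) :
    siteKron K ι n (Pi.mulSingle i T) * siteKron K ι n A =
      siteKron K ι n (Function.update A i (T * A i)) := by
  rw [siteKron_mul]
  congr 1
  ext1 j
  rcases eq_or_ne j i with rfl | h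
  · simp
  · simp [h]

lemma siteKron_mul_mulSingle [DecidableEq ι] [Fintype n] [DecidableEq n] (i : ι)
    (T : Matrix n n K) (A : ι → Matrix n n K) :
    siteKron K ι n A * siteKron K ι n (Pi.mulSingle i T) =
      siteKron K ι n (Function.update A i (A i * T)) := by
  rw [siteKron_mul]
  congr 1
  ext1 j
  rcases eq_or_ne j i with rfl | h
  · simp
  · simp [h]

lemma siteKron_one [DecidableEq n] : siteKron K ι n 1 = 1 := by
  ext e e'
  simp only [siteKron_apply, Pi.one_apply, Matrix.one_apply, Finset.prod_ite_zero,
    Finset.prod_const_one, Finset.mem_univ, true_imp_iff, funext_iff]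

lemma siteKron_single [DecidableEq n] (t o : ι → n) :
    siteKron K ι n (fun i => Matrix.single (t i) (o i) 1) = Matrix.single t o 1 := by
  ext e e'
  simp only [siteKron_apply, Matrix.single_apply, Finset.prod_ite_zero, Finset.prod_const_one,
    Finset.mem_univ, true_imp_iff, funext_iff, forall_and]

end Sites

/-! ### Normal ordering -/

section NormalOrder

variable {K ι : Type*} [Field K] [Fintype ι] {N : ℕ}

variable (K ι N) in
/-- Normal ordering: the monomial `∏ xᵢ^aᵢ yᵢ^bᵢ`, with `xᵢ = X (inl i)` and `yᵢ = X (inr i)`, acts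
by `Xᵢ^aᵢ Dᵢ^bᵢ` at the site `i`. -/
noncomputable def normalOrder :
    MvPolynomial (ι ⊕ ι) K →ₗ[K] Matrix (ι → Fin N) (ι → Fin N) K :=
  (basisMonomials (ι ⊕ ι) K).constr K fun d =>
    siteKron K ι (Fin N) fun i => mulX K N ^ d (Sum.inl i) * dunkl K N ^ d (Sum.inr i)

/-- Every basis vector `e` occurring in `w` has only odd exponents. -/
def OddSupported (w : (ι → Fin N) → K) : Prop := ∀ e, w e ≠ 0 → ∀ i, Odd (e i : ℕ)

lemma normalOrder_monomial (d : ι ⊕ ι →₀ ℕ) (c : K) : normalOrder K ι N (monomial d c) =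
    c • siteKron K ι (Fin N) fun i => mulX K N ^ d (Sum.inl i) * dunkl K N ^ d (Sum.inr i) :=
  constr_basisMonomials_monomial _ d c

lemma normalOrder_one : normalOrder K ι N 1 = 1 := by
  rw [← C_1, C_apply, normalOrder_monomial, one_smul]
  simp only [Finsupp.coe_zero, Pi.zero_apply, pow_zero, mul_one]
  exact siteKron_one

lemma exists_mem_support_of_normalOrder_apply_ne_zero {f : MvPolynomial (ι ⊕ ι) K}
    {e e' : ι → Fin N} (h : normalOrder K ι N f e e' ≠ 0) :
    ∃ d ∈ f.support, ∀ i, (e i : ℕ) + d (Sum.inr i) = e' i + d (Sum.inl i) := by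
  rw [f.as_sum, map_sum, Matrix.sum_apply] at h
  obtain ⟨d, hd, hne⟩ := Finset.exists_ne_zero_of_sum_ne_zero h
  refine ⟨d, hd, fun i => ?_⟩
  rw [normalOrder_monomial, Matrix.smul_apply, siteKron_apply] at hne
  obtain ⟨l, h₁, h₂⟩ := exists_of_mulX_pow_mul_dunkl_pow_apply_ne_zero
    (Finset.prod_ne_zero_iff.1 (right_ne_zero_of_mul hne) i (Finset.mem_univ i))
  omega

lemma normalOrder_surjective [CharZero K] : Function.Surjective (normalOrder K ι N) := by
  classical
  have hsingle (t o : ι → Fin N) :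
      Matrix.single t o (1 : K) ∈ LinearMap.range (normalOrder K ι N) := by
    choose c hc using fun i => (Submodule.mem_span_range_iff_exists_fun K).1
      (single_mem_normalSpan (K := K) (t i) (o i))
    rw [← siteKron_single, ← funext hc, MultilinearMap.map_sum]
    refine Submodule.sum_mem _ fun p _ => ?_
    rw [MultilinearMap.map_smul_univ]
    refine Submodule.smul_mem _ _ ⟨monomial (Finsupp.equivFunOnFinite.symm
      (Sum.elim (fun i => ((p i).1 : ℕ)) fun i => ((p i).2 : ℕ))) 1, ?_⟩
    simp [normalOrder_monomial]
  intro T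
  rw [← LinearMap.mem_range, Matrix.matrix_eq_sum_single T]
  refine Submodule.sum_mem _ fun t _ => Submodule.sum_mem _ fun o _ => ?_
  rw [← mul_one (T t o), ← smul_eq_mul, ← Matrix.smul_single]
  exact Submodule.smul_mem _ _ (hsingle t o)

variable [DecidableEq ι]

/-- The vector obtained by applying a normally ordered polynomial to `w`. -/
noncomputable def applyNormal :
    ((ι → Fin N) → K) →ₗ[K] MvPolynomial (ι ⊕ ι) K →ₗ[K] (ι → Fin N) → K :=
  ((Matrix.mulVecBilin K K).comp (normalOrder K ι N)).flip

lemma applyNormal_apply (w : (ι → Fin N) → K) (f : MvPolynomial (ι ⊕ ι) K) :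
    applyNormal w f = (normalOrder K ι N f).mulVec w := rfl

lemma applyNormal_one (w : (ι → Fin N) → K) : applyNormal w 1 = w := by
  rw [applyNormal_apply, normalOrder_one, Matrix.one_mulVec]

lemma exists_of_applyNormal_apply_ne_zero {w : (ι → Fin N) → K} {f : MvPolynomial (ι ⊕ ι) K}
    {e : ι → Fin N} (h : applyNormal w f e ≠ 0) : ∃ e', w e' ≠ 0 ∧
      ∃ d ∈ f.support, ∀ i, (e i : ℕ) + d (Sum.inr i) = e' i + d (Sum.inl i) := by
  obtain ⟨e', -, he'⟩ := Finset.exists_ne_zero_of_sum_ne_zero h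
  exact ⟨e', right_ne_zero_of_mul he',
    exists_mem_support_of_normalOrder_apply_ne_zero (left_ne_zero_of_mul he')⟩

lemma exists_applyNormal_eq_single [CharZero K] (t o : ι → Fin N) :
    ∃ f : MvPolynomial (ι ⊕ ι) K, ∀ w, applyNormal w f = Pi.single t (w o) := by
  obtain ⟨f, hf⟩ := normalOrder_surjective (Matrix.single t o (1 : K))
  refine ⟨f, fun w => ?_⟩
  rw [applyNormal_apply, hf, Matrix.single_mulVec, one_mul, Pi.single]

lemma applyNormal_surjective [CharZero K] {w : (ι → Fin N) → K} (hw : w ≠ 0) :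
    Function.Surjective (applyNormal w) := by
  obtain ⟨o, ho⟩ := Function.ne_iff.1 hw
  intro v
  choose f hf using fun t => exists_applyNormal_eq_single (K := K) (N := N) t o
  refine ⟨∑ t, (v t / w o) • f t, ?_⟩
  rw [map_sum]
  ext e
  simp [hf, Finset.sum_apply, Pi.single_apply, div_mul_cancel₀ _ ho]

end NormalOrder

section Lowering

variable {K ι : Type*} [Field K] {N : ℕ}

variable (K N) in
/-- The correction to `Dᵢ f ↦ yᵢ f` produced by moving `Dᵢ` past `Xᵢ`. -/
noncomputable def lowering (i : ι) : MvPolynomial (ι ⊕ ι) K →ₗ[K] MvPolynomial (ι ⊕ ι) K :=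
  (basisMonomials (ι ⊕ ι) K).constr K fun d =>
    monomial (d - Finsupp.single (Sum.inl i) 1) (loweringCoeff K N (d (Sum.inl i)) (d (Sum.inr i)))

lemma lowering_monomial (i : ι) (d : ι ⊕ ι →₀ ℕ) (c : K) : lowering K N i (monomial d c) =
    c • monomial (d - Finsupp.single (Sum.inl i) 1)
      (loweringCoeff K N (d (Sum.inl i)) (d (Sum.inr i))) :=
  constr_basisMonomials_monomial _ d c

lemma lowerSum_le_comap_lowering (i : ι) (L : ℕ) :
    lowerSum (homogeneousSubmodule (ι ⊕ ι) K) L ≤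
      (lowerSum (homogeneousSubmodule (ι ⊕ ι) K) L).comap (lowering K N i) := by
  conv_lhs => rw [lowerSum_homogeneousSubmodule, restrictSupport_eq_span]
  rw [Submodule.span_le]
  rintro _ ⟨d, hd, rfl⟩
  rw [SetLike.mem_coe, Submodule.mem_comap, lowering_monomial, one_smul]
  exact le_lowerSum _ ((Finsupp.degree_mono tsub_le_self).trans_lt hd)
    (isHomogeneous_monomial _ rfl)

variable [Fintype ι] [DecidableEq ι]

lemma siteKron_parity_mulVec {w : (ι → Fin N) → K} (hw : OddSupported w) (i : ι) :
    (siteKron K ι (Fin N) (Pi.mulSingle i (parity K N))).mulVec w = -w := by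
  have hdiag : siteKron K ι (Fin N) (Pi.mulSingle i (parity K N)) =
      Matrix.diagonal fun e => (-1 : K) ^ (e i : ℕ) := by
    ext e e'
    rw [siteKron_apply, Matrix.diagonal_apply]
    split_ifs with h
    · subst h
      rw [Finset.prod_eq_single i (fun j _ hj => by simp [hj]) (by simp)]
      simp [parity]
    · obtain ⟨j, hj⟩ := Function.ne_iff.1 h
      refine Finset.prod_eq_zero (Finset.mem_univ j) ?_
      rcases eq_or_ne j i with rfl | hji <;> simp [parity, *]
  ext e
  rw [hdiag, Matrix.mulVec_diagonal, Pi.neg_apply]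
  by_cases he : w e = 0
  · rw [he, mul_zero, neg_zero]
  · rw [(hw e he i).neg_one_pow, neg_one_mul]

lemma mulX_mulVec_applyNormal (w : (ι → Fin N) → K) (i : ι) (f : MvPolynomial (ι ⊕ ι) K) :
    (siteKron K ι (Fin N) (Pi.mulSingle i (mulX K N))).mulVec (applyNormal w f) =
      applyNormal w (X (Sum.inl i) * f) := by
  induction f using MvPolynomial.induction_on' with
  | add p q hp hq => rw [mul_add, map_add, map_add, Matrix.mulVec_add, hp, hq]
  | monomial d c =>
    rw [X, monomial_mul, one_mul, applyNormal_apply, applyNormal_apply, normalOrder_monomial,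
      normalOrder_monomial, Matrix.mulVec_mulVec, mul_smul_comm, siteKron_mulSingle_mul]
    congr 3
    ext1 j
    rcases eq_or_ne j i with rfl | h
    · simp [pow_add, mul_assoc]
    · simp [h]

lemma siteKron_update_mul_parity_mulVec {w : (ι → Fin N) → K} (hw : OddSupported w) (i : ι)
    (A : ι → Matrix (Fin N) (Fin N) K) (T : Matrix (Fin N) (Fin N) K) :
    (siteKron K ι (Fin N) (Function.update A i (T * parity K N))).mulVec w =
      -(siteKron K ι (Fin N) (Function.update A i T)).mulVec w := by
  have h : Function.update A i (T * parity K N) = Function.update (Function.update A i T) i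
      (Function.update A i T i * parity K N) := by
    rw [Function.update_idem, Function.update_self]
  rw [h, ← siteKron_mul_mulSingle, ← Matrix.mulVec_mulVec, siteKron_parity_mulVec hw,
    Matrix.mulVec_neg]

lemma siteKron_update_dunkl_mul_mulVec (hN : Odd N) {w : (ι → Fin N) → K} (hw : OddSupported w)
    (i : ι) (A : ι → Matrix (Fin N) (Fin N) K) (a b : ℕ) :
    (siteKron K ι (Fin N) (Function.update A i
        (dunkl K N * (mulX K N ^ a * dunkl K N ^ b)))).mulVec w =
      (siteKron K ι (Fin N) (Function.update A i (mulX K N ^ a * dunkl K N ^ (b + 1)))).mulVec w +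
      loweringCoeff K N a b • (siteKron K ι (Fin N)
        (Function.update A i (mulX K N ^ (a - 1) * dunkl K N ^ b))).mulVec w := by
  rcases a with _ | a
  · simp [loweringCoeff_zero, pow_succ']
  · rw [dunkl_mul_mulX_pow_succ_mul_dunkl_pow hN, MultilinearMap.map_update_sub,
      MultilinearMap.map_update_add, MultilinearMap.map_update_smul,
      MultilinearMap.map_update_smul, Matrix.sub_mulVec, Matrix.add_mulVec, Matrix.smul_mulVec,
      Matrix.smul_mulVec, siteKron_update_mul_parity_mulVec hw, loweringCoeff_succ, add_smul,
      smul_neg, sub_neg_eq_add, add_assoc, Nat.add_sub_cancel]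

lemma dunkl_mulVec_applyNormal (hN : Odd N) {w : (ι → Fin N) → K} (hw : OddSupported w) (i : ι)
    (f : MvPolynomial (ι ⊕ ι) K) :
    (siteKron K ι (Fin N) (Pi.mulSingle i (dunkl K N))).mulVec (applyNormal w f) =
      applyNormal w (X (Sum.inr i) * f) + applyNormal w (lowering K N i f) := by
  induction f using MvPolynomial.induction_on' with
  | add p q hp hq =>
    rw [mul_add, map_add, map_add, map_add, map_add, Matrix.mulVec_add, hp, hq, add_add_add_comm]
  | monomial d c =>
    rw [X, monomial_mul, one_mul, lowering_monomial, map_smul, ← mul_one (loweringCoeff _ _ _ _),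
      ← smul_eq_mul, ← smul_monomial, map_smul]
    simp only [applyNormal_apply, normalOrder_monomial, one_smul, Matrix.smul_mulVec,
      Matrix.mulVec_smul, Matrix.mulVec_mulVec, siteKron_mulSingle_mul, ← smul_add]
    rw [siteKron_update_dunkl_mul_mulVec hN hw]
    congr 6 <;>
    · ext1 j
      rcases eq_or_ne j i with rfl | h
      · simp [add_comm]
      · simp [h]

end Lowering

section Symmetry

variable (K : Type*) [Field K] {ι n : Type*}

variable (ι n) in
/-- Permutations of the sites acting on vectors: `e ↦ w e` is sent to `e ↦ w (e ∘ σ)`. -/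
def permute : Representation K (Equiv.Perm ι) ((ι → n) → K) where
  toFun σ := LinearMap.funLeft K K (· ∘ σ)
  map_one' := rfl
  map_mul' _ _ := rfl

variable (ι) in
/-- Permutations of the sites acting on polynomials, simultaneously on the `xᵢ` and the `yᵢ`. -/
noncomputable def renameSites : Representation K (Equiv.Perm ι) (MvPolynomial (ι ⊕ ι) K) where
  toFun σ := (rename (Sum.map σ σ)).toLinearMap
  map_one' := LinearMap.ext fun f => by simp
  map_mul' σ τ := LinearMap.ext fun f => by
    simp [rename_rename, Sum.map_comp_map]

variable {K}

lemma permute_apply (σ : Equiv.Perm ι) (w : (ι → n) → K) (e : ι → n) :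
    permute K ι n σ w e = w (e ∘ σ) := rfl

lemma renameSites_apply (σ : Equiv.Perm ι) (f : MvPolynomial (ι ⊕ ι) K) :
    renameSites K ι σ f = rename (Sum.map σ σ) f := rfl

lemma renameSites_mem_homogeneousSubmodule (σ : Equiv.Perm ι) {m : ℕ}
    {f : MvPolynomial (ι ⊕ ι) K} (hf : f ∈ homogeneousSubmodule (ι ⊕ ι) K m) :
    renameSites K ι σ f ∈ homogeneousSubmodule (ι ⊕ ι) K m :=
  IsHomogeneous.rename_isHomogeneous hf

lemma homogeneousComponent_renameSites (σ : Equiv.Perm ι) (m : ℕ) (f : MvPolynomial (ι ⊕ ι) K) :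
    homogeneousComponent m (renameSites K ι σ f) =
      renameSites K ι σ (homogeneousComponent m f) := by
  induction f using MvPolynomial.induction_on' with
  | add p q hp hq => simp only [map_add, hp, hq]
  | monomial d c =>
    have h : (monomial d c).IsHomogeneous d.degree := isHomogeneous_monomial c rfl
    rw [homogeneousComponent_of_mem h,
      homogeneousComponent_of_mem (renameSites_mem_homogeneousSubmodule σ h)]
    by_cases hm : m = d.degree <;> simp [hm]

lemma mapDomain_sumMap_inl (σ : Equiv.Perm ι) (d : ι ⊕ ι →₀ ℕ) (i : ι) :
    d.mapDomain (Sum.map σ σ) (Sum.inl (σ i)) = d (Sum.inl i) :=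
  Finsupp.mapDomain_apply (σ.injective.sumMap σ.injective) d (Sum.inl i)

lemma mapDomain_sumMap_inr (σ : Equiv.Perm ι) (d : ι ⊕ ι →₀ ℕ) (i : ι) :
    d.mapDomain (Sum.map σ σ) (Sum.inr (σ i)) = d (Sum.inr i) :=
  Finsupp.mapDomain_apply (σ.injective.sumMap σ.injective) d (Sum.inr i)

variable {N : ℕ}

lemma OddSupported.permute {w : (ι → Fin N) → K} (hw : OddSupported w) (σ : Equiv.Perm ι) :
    OddSupported (permute K ι (Fin N) σ w) := fun e he i => by
  simpa using hw _ he (σ.symm i)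

variable [Fintype ι]

lemma normalOrder_renameSites_apply (σ : Equiv.Perm ι) (f : MvPolynomial (ι ⊕ ι) K)
    (e e' : ι → Fin N) :
    normalOrder K ι N (renameSites K ι σ f) e e' = normalOrder K ι N f (e ∘ σ) (e' ∘ σ) := by
  induction f using MvPolynomial.induction_on' with
  | add p q hp hq => simp only [map_add, Matrix.add_apply, hp, hq]
  | monomial d c =>
    simp only [renameSites_apply, rename_monomial, normalOrder_monomial, Matrix.smul_apply,
      siteKron_apply]
    rw [← Equiv.prod_comp σ]
    simp only [mapDomain_sumMap_inl, mapDomain_sumMap_inr, Function.comp_apply]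

variable [DecidableEq ι]

lemma applyNormal_permute_renameSites (σ : Equiv.Perm ι) (w : (ι → Fin N) → K)
    (f : MvPolynomial (ι ⊕ ι) K) :
    applyNormal (permute K ι (Fin N) σ w) (renameSites K ι σ f) =
      permute K ι (Fin N) σ (applyNormal w f) := by
  ext e
  simp only [applyNormal_apply, Matrix.mulVec, dotProduct, permute_apply,
    normalOrder_renameSites_apply]
  exact Equiv.sum_comp (σ.symm.arrowCongr (Equiv.refl (Fin N)))
    fun e' => normalOrder K ι N f (e ∘ σ) e' * w e'

lemma applyNormal_renameSites (σ : Equiv.Perm ι) (w : (ι → Fin N) → K)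
    (f : MvPolynomial (ι ⊕ ι) K) : applyNormal w (renameSites K ι σ f) =
      permute K ι (Fin N) σ (applyNormal (permute K ι (Fin N) σ⁻¹ w) f) := by
  rw [← applyNormal_permute_renameSites, (permute K ι (Fin N)).self_inv_apply]

/-- A polynomial is applied simultaneously to all the translates of `w`. -/
noncomputable def orbitMap (w : (ι → Fin N) → K) :
    MvPolynomial (ι ⊕ ι) K →ₗ[K] Equiv.Perm ι → (ι → Fin N) → K :=
  LinearMap.pi fun σ => applyNormal (permute K ι (Fin N) σ w)

lemma orbitMap_apply (w : (ι → Fin N) → K) (f : MvPolynomial (ι ⊕ ι) K) (σ : Equiv.Perm ι) :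
    orbitMap w f σ = applyNormal (permute K ι (Fin N) σ w) f := rfl

lemma orbitMap_renameSites_eq_zero {w : (ι → Fin N) → K} {f : MvPolynomial (ι ⊕ ι) K}
    (hf : orbitMap w f = 0) (σ : Equiv.Perm ι) : orbitMap w (renameSites K ι σ f) = 0 := by
  ext1 g
  have h : orbitMap w f (σ⁻¹ * g) = 0 := congrFun hf _
  rw [orbitMap_apply, map_mul, Module.End.mul_apply] at h
  rw [orbitMap_apply, applyNormal_renameSites, h, map_zero, Pi.zero_apply]

lemma X_mul_mem_leadingPolynomials_orbitMap (hN : Odd N) {w : (ι → Fin N) → K}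
    (hw : OddSupported w) (j : ι ⊕ ι) {f : MvPolynomial (ι ⊕ ι) K}
    (hf : f ∈ leadingPolynomials (orbitMap w)) : X j * f ∈ leadingPolynomials (orbitMap w) := by
  rcases j with i | i
  · refine X_mul_mem_leadingPolynomials (E := 0) (T := LinearMap.compLeft
      (siteKron K ι (Fin N) (Pi.mulSingle i (mulX K N))).mulVecLin _) (fun L f _ => ?_)
      (fun f => ?_) hf
    · exact Submodule.zero_mem _
    · ext1 σ
      rw [LinearMap.zero_apply, map_zero, add_zero]
      exact mulX_mulVec_applyNormal _ i f
  · refine X_mul_mem_leadingPolynomials (E := lowering K N i) (T := LinearMap.compLeft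
      (siteKron K ι (Fin N) (Pi.mulSingle i (dunkl K N))).mulVecLin _)
      (lowerSum_le_comap_lowering i) (fun f => ?_) hf
    ext1 σ
    exact dunkl_mulVec_applyNormal hN (hw.permute σ) i f

/- If a form `f` of positive degree acts on the orbit of `w` as the scalar `c`, then `f - c` is a
relation with leading form `f`. -/
lemma mem_leadingPolynomials_orbitMap_of_forall_eq_smul {w : (ι → Fin N) → K}
    {f : MvPolynomial (ι ⊕ ι) K} (hf₀ : constantCoeff f = 0)
    (hf : ∀ σ, renameSites K ι σ f = f)
    (h : ∀ m, ∃ c : K, applyNormal w (homogeneousComponent m f) = c • w) :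
    f ∈ leadingPolynomials (orbitMap w) := by
  rw [mem_leadingPolynomials]
  rintro (_ | m)
  · rw [homogeneousComponent_zero, ← constantCoeff_eq, hf₀, C_0]
    exact Submodule.zero_mem _
  obtain ⟨c, hc⟩ := h (m + 1)
  refine ⟨homogeneousComponent_mem _ _, c • 1, Submodule.smul_mem _ _
    (le_lowerSum _ m.succ_pos (isHomogeneous_one _ _)), ?_⟩
  ext1 σ
  rw [orbitMap_apply, orbitMap_apply, map_smul, applyNormal_one]
  conv_rhs => rw [← hf σ]
  rw [homogeneousComponent_renameSites, applyNormal_permute_renameSites, hc, map_smul]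

end Symmetry

/-! ### Alternants of blocks of sites -/

section Alternants

variable {K ι β : Type*} [Field K] {k : ℕ} (blk : β × Fin k ≃ ι)

/-- The permutation of the sites acting by `π a` inside the block `a`. -/
def blockPerm (π : β → Equiv.Perm (Fin k)) : Equiv.Perm ι :=
  blk.permCongr (Equiv.prodShear (Equiv.refl β) π)

lemma blockPerm_apply (π : β → Equiv.Perm (Fin k)) (a : β) (j : Fin k) :
    blockPerm blk π (blk (a, j)) = blk (a, π a j) := by
  simp [blockPerm]

/-- The vector `e` of exponents is, in each block `a`, the arrangement `π a` of the odd numbers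
below `2 * k`. -/
def IsArrangement (π : β → Equiv.Perm (Fin k)) (e : ι → Fin (2 * k + 1)) : Prop :=
  ∀ a j, (e (blk (a, j)) : ℕ) = 2 * π a j + 1

variable [Fintype β]

/-- Vectors which change by the sign under permutations of the sites inside the blocks. -/
def IsBlockAlternating (u : (ι → Fin (2 * k + 1)) → K) : Prop :=
  ∀ π : β → Equiv.Perm (Fin k),
    permute K ι _ (blockPerm blk π) u = (∏ a, ((Equiv.Perm.sign (π a) : ℤ) : K)) • u

variable (K) in
/-- The product over the blocks of the determinants `det (xⱼ ^ (2 c + 1))`. -/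
def blockAlternant : (ι → Fin (2 * k + 1)) → K := fun e =>
  ∏ a, (Matrix.of fun j c : Fin k => if (e (blk (a, j)) : ℕ) = 2 * c + 1 then (1 : K) else 0).det

variable {blk}

lemma isBlockAlternating_blockAlternant : IsBlockAlternating blk (blockAlternant K blk) := by
  intro π
  ext1 e
  simp only [permute_apply, blockAlternant, Pi.smul_apply, smul_eq_mul, ← Finset.prod_mul_distrib,
    Function.comp_apply, blockPerm_apply]
  exact Finset.prod_congr rfl fun a _ => Matrix.det_permute (π a) (Matrix.of fun j c : Fin k =>
    if (e (blk (a, j)) : ℕ) = 2 * c + 1 then (1 : K) else 0)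

lemma blockAlternant_apply {π : β → Equiv.Perm (Fin k)} {e : ι → Fin (2 * k + 1)}
    (h : IsArrangement blk π e) :
    blockAlternant K blk e = ∏ a, ((Equiv.Perm.sign (π a) : ℤ) : K) := by
  refine Finset.prod_congr rfl fun a _ => ?_
  rw [← Matrix.det_permutation]
  congr 1
  ext j c
  simp [h a j, Equiv.Perm.permMatrix, PEquiv.toMatrix_apply, Fin.ext_iff, eq_comm]

lemma oddSupported_blockAlternant : OddSupported (blockAlternant K blk) := by
  intro e he i
  obtain ⟨⟨a, j⟩, rfl⟩ := blk.surjective i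
  by_contra hodd
  refine Finset.prod_ne_zero_iff.1 he a (Finset.mem_univ a)
    (Matrix.det_eq_zero_of_row_eq_zero j fun c => if_neg fun h => hodd ⟨c, h⟩)

namespace IsBlockAlternating

variable {u : (ι → Fin (2 * k + 1)) → K}

lemma apply_comp_blockPerm (hu : IsBlockAlternating blk u) (π : β → Equiv.Perm (Fin k))
    (e : ι → Fin (2 * k + 1)) :
    u (e ∘ blockPerm blk π) = (∏ a, ((Equiv.Perm.sign (π a) : ℤ) : K)) * u e :=
  congrFun (hu π) e

lemma injective_of_apply_ne_zero [CharZero K] (hu : IsBlockAlternating blk u)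
    {e : ι → Fin (2 * k + 1)} (he : u e ≠ 0) (a : β) :
    Function.Injective fun j => e (blk (a, j)) := by
  classical
  intro j j' h
  by_contra hne
  have hswap : e ∘ blockPerm blk (Function.update 1 a (Equiv.swap j j')) = e := by
    ext1 i
    obtain ⟨⟨b, l⟩, rfl⟩ := blk.surjective i
    rw [Function.comp_apply, blockPerm_apply]
    rcases eq_or_ne b a with rfl | hb
    · rw [Function.update_self, Equiv.swap_apply_def]
      split_ifs with h₁ h₂
      · rw [h₁]; exact h.symm
      · rw [h₂]; exact h
      · rfl
    · rw [Function.update_of_ne hb, Pi.one_apply, Equiv.Perm.one_apply]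
  have hneg : u e = -u e := by
    conv_lhs => rw [← hswap, hu.apply_comp_blockPerm]
    rw [Finset.prod_eq_single a (fun b _ hb => by simp [hb]) (by simp)]
    simp [Equiv.Perm.sign_swap hne]
  exact he (self_eq_neg.1 hneg)

lemma exists_isArrangement [CharZero K] (hu : IsBlockAlternating blk u) (ho : OddSupported u)
    {e : ι → Fin (2 * k + 1)} (he : u e ≠ 0) : ∃ π, IsArrangement blk π e := by
  choose γ hγ using ho e he
  have hlt (i) : γ i < k := by have := (e i).isLt; have := hγ i; omega
  have hinj (a : β) : Function.Injective fun j => (⟨γ (blk (a, j)), hlt _⟩ : Fin k) :=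
    fun j j' h => hu.injective_of_apply_ne_zero he a (Fin.ext (by
      simp only [hγ, Fin.mk.inj_iff.1 h]))
  exact ⟨fun a => Equiv.ofBijective _ (Finite.injective_iff_bijective.1 (hinj a)),
    fun a j => hγ (blk (a, j))⟩

lemma exists_eq_smul_blockAlternant [CharZero K] (hu : IsBlockAlternating blk u)
    (ho : OddSupported u) : ∃ c : K, u = c • blockAlternant K blk := by
  let e₀ : ι → Fin (2 * k + 1) := fun i => ⟨2 * (blk.symm i).2 + 1, by omega⟩
  refine ⟨u e₀, funext fun e => ?_⟩
  rw [Pi.smul_apply, smul_eq_mul]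
  by_cases h : ∃ π, IsArrangement blk π e
  · obtain ⟨π, hπ⟩ := h
    have he : e = e₀ ∘ blockPerm blk π := by
      ext1 i
      obtain ⟨⟨a, j⟩, rfl⟩ := blk.surjective i
      rw [Function.comp_apply, blockPerm_apply, Fin.ext_iff, hπ a j]
      simp [e₀]
    rw [blockAlternant_apply hπ, mul_comm, he, hu.apply_comp_blockPerm]
  · have hzero {v : (ι → Fin (2 * k + 1)) → K} (hv : IsBlockAlternating blk v)
        (hov : OddSupported v) : v e = 0 := by
      by_contra hne
      exact h (hv.exists_isArrangement hov hne)
    rw [hzero hu ho, hzero isBlockAlternating_blockAlternant oddSupported_blockAlternant, mul_zero]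

end IsBlockAlternating

variable [Fintype ι]

lemma sum_two_mul_add_one (k : ℕ) : ∑ j : Fin k, (2 * (j : ℕ) + 1) = k ^ 2 := by
  rw [Fin.sum_univ_eq_sum_range fun j => 2 * j + 1]
  induction k with
  | zero => rfl
  | succ k ih => rw [Finset.sum_range_succ, ih]; ring

lemma IsArrangement.sum_eq {π : β → Equiv.Perm (Fin k)} {e : ι → Fin (2 * k + 1)}
    (h : IsArrangement blk π e) : ∑ i, (e i : ℕ) = Fintype.card β * k ^ 2 := by
  have hblock (a : β) : ∑ j, (e (blk (a, j)) : ℕ) = k ^ 2 := by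
    simp only [h a, Equiv.sum_comp (π a) fun j => 2 * (j : ℕ) + 1, sum_two_mul_add_one]
  rw [← blk.sum_comp, Fintype.sum_prod_type]
  simp only [hblock, Finset.sum_const, Finset.card_univ, smul_eq_mul]

variable [DecidableEq ι]

lemma mem_leadingPolynomials_orbitMap_blockAlternant [CharZero K] {f : MvPolynomial (ι ⊕ ι) K}
    (hf₀ : constantCoeff f = 0) (hf : ∀ σ, renameSites K ι σ f = f)
    (heven : ∀ d ∈ f.support, ∀ i, Even (d (Sum.inl i) + d (Sum.inr i))) :
    f ∈ leadingPolynomials (orbitMap (blockAlternant K blk)) := by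
  refine mem_leadingPolynomials_orbitMap_of_forall_eq_smul hf₀ hf fun m =>
    IsBlockAlternating.exists_eq_smul_blockAlternant (fun π => ?_) fun e he i => ?_
  · rw [← applyNormal_permute_renameSites, ← homogeneousComponent_renameSites, hf,
      isBlockAlternating_blockAlternant, map_smul, LinearMap.smul_apply]
  · obtain ⟨e', he', d, hd, hed⟩ := exists_of_applyNormal_apply_ne_zero he
    rw [support_homogeneousComponent] at hd
    have h₁ := oddSupported_blockAlternant e' he' i
    have h₂ := heven d (Finset.mem_of_mem_filter d hd) i
    have h₃ := hed i
    rw [Nat.odd_iff] at h₁ ⊢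
    rw [Nat.even_iff] at h₂
    omega

end Alternants

/-! ### The ideal of positive-degree invariants -/

section Ideal

variable {n : ℕ}

lemma bAct_one (σ : Equiv.Perm (Fin n)) : bAct n 1 σ = rename (Sum.map σ σ) := by
  ext j
  rcases j with i | i <;> simp [bAct]

lemma bAct_comp_bAct (ε ε' : Fin n → ℤˣ) (σ σ' : Equiv.Perm (Fin n)) :
    (bAct n ε' σ').comp (bAct n ε σ) = bAct n (ε * ε' ∘ σ) (σ' * σ) := by
  ext1 j
  rcases j with i | i <;> simp [bAct, smul_smul]

lemma bAct_monomial_one (ε : Fin n → ℤˣ) (d : Fin n ⊕ Fin n →₀ ℕ) (c : ℂ) :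
    bAct n ε 1 (monomial d c) =
      (∏ i, ((ε i : ℤ) : ℂ) ^ (d (Sum.inl i) + d (Sum.inr i))) • monomial d c := by
  rw [bAct, aeval_monomial, monomial_eq, Finsupp.prod_fintype _ _ (by simp),
    Finsupp.prod_fintype _ _ (by simp), Fintype.prod_sum_type, Fintype.prod_sum_type]
  simp only [Sum.elim_inl, Sum.elim_inr, Equiv.Perm.one_apply, smul_eq_C_mul,
    algebraMap_eq, mul_pow, Finset.prod_mul_distrib, map_mul, map_prod, map_pow, pow_add]
  ring

lemma even_of_mem_support_of_bAct {f : MvPolynomial (Fin n ⊕ Fin n) ℂ}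
    (hf : ∀ ε, bAct n ε 1 f = f) {d : Fin n ⊕ Fin n →₀ ℕ} (hd : d ∈ f.support) (i : Fin n) :
    Even (d (Sum.inl i) + d (Sum.inr i)) := by
  set ε : Fin n → ℤˣ := Function.update 1 i (-1)
  have hcoeff (g : MvPolynomial (Fin n ⊕ Fin n) ℂ) : coeff d (bAct n ε 1 g) =
      (-1) ^ (d (Sum.inl i) + d (Sum.inr i)) * coeff d g := by
    induction g using MvPolynomial.induction_on' with
    | add p q hp hq => rw [map_add, coeff_add, coeff_add, hp, hq, mul_add]
    | monomial s c =>
      rw [bAct_monomial_one, Finset.prod_eq_single i (fun j _ hj => by simp [ε, hj]) (by simp),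
        coeff_smul, coeff_monomial]
      split_ifs with h
      · simp [ε, h]
      · simp
  by_contra hodd
  have h := hcoeff f
  rw [hf, (Nat.not_even_iff_odd.1 hodd).neg_one_pow, neg_one_mul] at h
  exact MvPolynomial.mem_support_iff.1 hd (self_eq_neg.1 h)

lemma diagIdeal_le_leadingPolynomials {β : Type*} [Fintype β] {k : ℕ} (blk : β × Fin k ≃ Fin n)
    {f : MvPolynomial (Fin n ⊕ Fin n) ℂ} (hf : f ∈ diagIdeal n) :
    f ∈ leadingPolynomials (orbitMap (blockAlternant ℂ blk)) := by
  refine mem_of_mem_ideal_span (fun j g => X_mul_mem_leadingPolynomials_orbitMap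
    (odd_two_mul_add_one k) oddSupported_blockAlternant j) ?_ hf
  rintro g ⟨hg, hg₀⟩
  refine mem_leadingPolynomials_orbitMap_blockAlternant hg₀ (fun σ => ?_) fun d hd =>
    even_of_mem_support_of_bAct (fun ε => hg ε 1) hd
  rw [renameSites_apply, ← bAct_one, hg]

lemma mk_diagIdeal_of_forall_bAct {f : MvPolynomial (Fin n ⊕ Fin n) ℂ}
    (hf : ∀ ε σ, bAct n ε σ f = f) : Ideal.Quotient.mk (diagIdeal n) f =
      algebraMap ℂ (MvPolynomial (Fin n ⊕ Fin n) ℂ ⧸ diagIdeal n) (constantCoeff f) := by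
  refine Ideal.Quotient.eq.2 (Ideal.subset_span ⟨fun ε σ => ?_, ?_⟩)
  · rw [map_sub, hf, AlgHom.commutes]
  · simp

lemma map_bAct_prod_X_sub_C (f : MvPolynomial (Fin n ⊕ Fin n) ℂ) (ε : Fin n → ℤˣ)
    (σ : Equiv.Perm (Fin n)) :
    (∏ g : (Fin n → ℤˣ) × Equiv.Perm (Fin n),
        (Polynomial.X - Polynomial.C (bAct n g.1 g.2 f))).map (bAct n ε σ : _ →+* _) =
      ∏ g : (Fin n → ℤˣ) × Equiv.Perm (Fin n),
        (Polynomial.X - Polynomial.C (bAct n g.1 g.2 f)) := by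
  let τ (g : (Fin n → ℤˣ) × Equiv.Perm (Fin n)) : (Fin n → ℤˣ) × Equiv.Perm (Fin n) :=
    (g.1 * ε ∘ g.2, σ * g.2)
  have hτ : Function.Injective τ := fun g g' h => by
    have h₂ : g.2 = g'.2 := mul_left_cancel (congrArg Prod.snd h)
    have h₁ := congrArg Prod.fst h
    simp only [τ, h₂] at h₁
    exact Prod.ext (mul_right_cancel h₁) h₂
  rw [Polynomial.map_prod]
  refine Fintype.prod_bijective τ (Finite.injective_iff_bijective.1 hτ) _ _ fun g => ?_
  rw [Polynomial.map_sub, Polynomial.map_X, Polynomial.map_C, ← bAct_comp_bAct]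
  rfl

/- Every `f` is a root of the monic polynomial `∏ (T - g f)`, the product over the group, whose
coefficients are invariant and thus become constants modulo the ideal. -/
instance : Algebra.IsIntegral ℂ (MvPolynomial (Fin n ⊕ Fin n) ℂ ⧸ diagIdeal n) := by
  refine ⟨fun x => ?_⟩
  obtain ⟨f, rfl⟩ := Ideal.Quotient.mk_surjective x
  set P : Polynomial (MvPolynomial (Fin n ⊕ Fin n) ℂ) :=
    ∏ g : (Fin n → ℤˣ) × Equiv.Perm (Fin n), (Polynomial.X - Polynomial.C (bAct n g.1 g.2 f))
    with hP
  have hmonic : P.Monic :=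
    Polynomial.monic_prod_of_monic _ _ fun _ _ => Polynomial.monic_X_sub_C _
  have hroot : P.eval f = 0 := by
    rw [hP, Polynomial.eval_prod]
    refine Finset.prod_eq_zero (Finset.mem_univ 1) ?_
    simp [bAct_one]
  have hcoeff (k) : Ideal.Quotient.mk (diagIdeal n) (P.coeff k) =
      algebraMap ℂ _ (constantCoeff (P.coeff k)) := by
    refine mk_diagIdeal_of_forall_bAct fun ε σ => ?_
    conv_rhs => rw [hP, ← map_bAct_prod_X_sub_C f ε σ, Polynomial.coeff_map]
    rfl
  refine ⟨P.map constantCoeff, hmonic.map _, ?_⟩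
  rw [Polynomial.eval₂_map, ← map_zero (Ideal.Quotient.mk (diagIdeal n)), ← hroot,
    Polynomial.eval, Polynomial.hom_eval₂, Polynomial.eval₂_eq_sum_range,
    Polynomial.eval₂_eq_sum_range]
  simp only [RingHom.comp_apply, RingHom.id_apply, hcoeff]

instance : FiniteDimensional ℂ (MvPolynomial (Fin n ⊕ Fin n) ℂ ⧸ diagIdeal n) :=
  Algebra.IsIntegral.finite

end Ideal

/-! ### Test polynomials -/

section SelectMonomials

variable {K σ : Type*} [Field K] (s : Set (σ →₀ ℕ))

open Classical in
variable (K) in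
/-- The projection of the polynomial ring onto the span of the monomials with exponents in `s`. -/
noncomputable def selectMonomials : MvPolynomial σ K →ₗ[K] MvPolynomial σ K :=
  (basisMonomials σ K).constr K fun d => if d ∈ s then monomial d 1 else 0

variable {s}

lemma selectMonomials_monomial_of_mem {d : σ →₀ ℕ} (hd : d ∈ s) (c : K) :
    selectMonomials K s (monomial d c) = monomial d c := by
  rw [selectMonomials, constr_basisMonomials_monomial, if_pos hd, smul_monomial, smul_eq_mul,
    mul_one]

lemma selectMonomials_monomial_of_notMem {d : σ →₀ ℕ} (hd : d ∉ s) (c : K) :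
    selectMonomials K s (monomial d c) = 0 := by
  rw [selectMonomials, constr_basisMonomials_monomial, if_neg hd, smul_zero]

lemma selectMonomials_mem_restrictSupport_inter {t : Set (σ →₀ ℕ)} {f : MvPolynomial σ K}
    (hf : f ∈ restrictSupport K t) : selectMonomials K s f ∈ restrictSupport K (s ∩ t) := by
  rw [restrictSupport_eq_span] at hf
  induction hf using Submodule.span_induction with
  | zero => simp
  | add f g _ _ hf hg => rw [map_add]; exact Submodule.add_mem _ hf hg
  | smul c f _ hf => rw [map_smul]; exact Submodule.smul_mem _ c hf
  | mem f hf =>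
    obtain ⟨d, hd, rfl⟩ := hf
    by_cases hs : d ∈ s
    · rw [selectMonomials_monomial_of_mem hs, restrictSupport_eq_span]
      exact Submodule.subset_span ⟨d, ⟨hs, hd⟩, rfl⟩
    · rw [selectMonomials_monomial_of_notMem hs]
      exact Submodule.zero_mem _

lemma selectMonomials_of_mem_restrictSupport {f : MvPolynomial σ K}
    (hf : f ∈ restrictSupport K s) : selectMonomials K s f = f := by
  rw [restrictSupport_eq_span] at hf
  induction hf using Submodule.span_induction with
  | zero => simp
  | add f g _ _ hf hg => rw [map_add, hf, hg]
  | smul c f _ hf => rw [map_smul, hf]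
  | mem f hf =>
    obtain ⟨d, hd, rfl⟩ := hf
    exact selectMonomials_monomial_of_mem hd 1

lemma averageMap_mem {G V : Type*} [Group G] [Fintype G] [Invertible (Fintype.card G : K)]
    [AddCommGroup V] [Module K V] (ρ : Representation K G V) {W : Submodule K V}
    (hW : ∀ g, ∀ v ∈ W, ρ g v ∈ W) {v : V} (hv : v ∈ W) : ρ.averageMap v ∈ W := by
  rw [Representation.averageMap, GroupAlgebra.average, map_smul, map_sum, LinearMap.smul_apply,
    LinearMap.sum_apply]
  refine Submodule.smul_mem _ _ (Submodule.sum_mem _ fun g _ => ?_)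
  rw [Representation.asAlgebraHom_of]
  exact hW g v hv

end SelectMonomials

section TestSpace

variable {K ι : Type*} [Field K] [Fintype ι] {N : ℕ}

/-- The exponents of odd degree at each site whose total bidegree difference lies in `S`. -/
def oddExponents (ι : Type*) [Fintype ι] (S : Set ℤ) : Set (ι ⊕ ι →₀ ℕ) :=
  {d | (∀ i, Odd (d (Sum.inl i) + d (Sum.inr i))) ∧
    ∑ i, ((d (Sum.inl i) : ℤ) - d (Sum.inr i)) ∈ S}

variable (K) in
/-- The polynomials supported on `oddExponents ι S` which are invariant under `H`. -/
noncomputable def testSpace (S : Set ℤ) (H : Subgroup (Equiv.Perm ι)) :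
    Submodule K (MvPolynomial (ι ⊕ ι) K) :=
  restrictSupport K (oddExponents ι S) ⊓
    Representation.invariants ((renameSites K ι).comp H.subtype)

/-- The weight `∑ eᵢ` of every basis vector `e` occurring in `w` is `c`. -/
def HasWeight (w : (ι → Fin N) → K) (c : ℕ) : Prop := ∀ e, w e ≠ 0 → ∑ i, (e i : ℕ) = c

lemma HasWeight.permute {w : (ι → Fin N) → K} {c : ℕ} (hw : HasWeight w c)
    (σ : Equiv.Perm ι) : HasWeight (permute K ι (Fin N) σ w) c := fun e he => by
  rw [← hw _ he]
  exact (Equiv.sum_comp σ fun i => (e i : ℕ)).symm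

variable {S : Set ℤ} {H : Subgroup (Equiv.Perm ι)}

lemma mapDomain_sumMap_mem_oddExponents (σ : Equiv.Perm ι) {d : ι ⊕ ι →₀ ℕ}
    (hd : d ∈ oddExponents ι S) : d.mapDomain (Sum.map σ σ) ∈ oddExponents ι S := by
  refine ⟨fun i => ?_, ?_⟩
  · obtain ⟨j, rfl⟩ := σ.surjective i
    rw [mapDomain_sumMap_inl, mapDomain_sumMap_inr]
    exact hd.1 j
  · rw [← Equiv.sum_comp σ]
    simp only [mapDomain_sumMap_inl, mapDomain_sumMap_inr]
    exact hd.2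

lemma renameSites_mem_restrictSupport_oddExponents (σ : Equiv.Perm ι)
    {f : MvPolynomial (ι ⊕ ι) K} (hf : f ∈ restrictSupport K (oddExponents ι S)) :
    renameSites K ι σ f ∈ restrictSupport K (oddExponents ι S) := by
  rw [restrictSupport_eq_span] at hf
  induction hf using Submodule.span_induction with
  | zero => simp
  | add f g _ _ hf hg => rw [map_add]; exact Submodule.add_mem _ hf hg
  | smul c f _ hf => rw [map_smul]; exact Submodule.smul_mem _ c hf
  | mem f hf =>
    obtain ⟨d, hd, rfl⟩ := hf
    rw [renameSites_apply, rename_monomial, restrictSupport_eq_span]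
    exact Submodule.subset_span ⟨_, mapDomain_sumMap_mem_oddExponents σ hd, rfl⟩

lemma homogeneousComponent_mem_testSpace {f : MvPolynomial (ι ⊕ ι) K}
    (hf : f ∈ testSpace K S H) (m : ℕ) : homogeneousComponent m f ∈ testSpace K S H := by
  refine ⟨fun d hd => ?_, fun σ => ?_⟩
  · exact hf.1 (Finset.mem_of_mem_filter d ((support_homogeneousComponent m f).subset hd))
  · exact (homogeneousComponent_renameSites (σ : Equiv.Perm ι) m f).symm.trans
      (congrArg _ (hf.2 σ))

variable [DecidableEq ι]

lemma mem_oddExponents_iff_of_applyNormal_ne_zero {w : (ι → Fin N) → K} (hw : OddSupported w)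
    {c : ℕ} (hc : HasWeight w c) {d : ι ⊕ ι →₀ ℕ} {a : K} {e : ι → Fin N}
    (h : applyNormal w (monomial d a) e ≠ 0) : d ∈ oddExponents ι S ↔
      (∀ i, Even (e i : ℕ)) ∧ ((∑ i, (e i : ℕ) : ℕ) - c : ℤ) ∈ S := by
  obtain ⟨e', he', d', hd', hed⟩ := exists_of_applyNormal_apply_ne_zero h
  obtain rfl : d' = d := Finset.mem_singleton.1 (support_monomial_subset hd')
  have hparity (i) : Odd (d' (Sum.inl i) + d' (Sum.inr i)) ↔ Even (e i : ℕ) := by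
    have h₁ := hw e' he' i
    have h₂ := hed i
    rw [Nat.odd_iff] at h₁ ⊢
    rw [Nat.even_iff]
    omega
  have hsum : ∑ i, ((d' (Sum.inl i) : ℤ) - d' (Sum.inr i)) = (∑ i, (e i : ℕ) : ℕ) - c := by
    rw [← hc e' he', Nat.cast_sum, Nat.cast_sum, ← Finset.sum_sub_distrib]
    refine Finset.sum_congr rfl fun i _ => ?_
    have h₂ := hed i
    omega
  rw [oddExponents, Set.mem_ofPred_eq, hsum, forall_congr' hparity]

open Classical in
lemma applyNormal_selectMonomials_apply {w : (ι → Fin N) → K} (hw : OddSupported w) {c : ℕ}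
    (hc : HasWeight w c) (f : MvPolynomial (ι ⊕ ι) K) (e : ι → Fin N) :
    applyNormal w (selectMonomials K (oddExponents ι S) f) e =
      if (∀ i, Even (e i : ℕ)) ∧ ((∑ i, (e i : ℕ) : ℕ) - c : ℤ) ∈ S
      then applyNormal w f e else 0 := by
  induction f using MvPolynomial.induction_on' with
  | add p q hp hq =>
    simp only [map_add, Pi.add_apply, hp, hq]
    split_ifs <;> simp
  | monomial d a =>
    by_cases hz : applyNormal w (monomial d a) e = 0
    · rw [hz, ite_self]
      by_cases hd : d ∈ oddExponents ι S
      · rw [selectMonomials_monomial_of_mem hd, hz]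
      · rw [selectMonomials_monomial_of_notMem hd, map_zero, Pi.zero_apply]
    · have hiff : d ∈ oddExponents ι S ↔
          (∀ i, Even (e i : ℕ)) ∧ ((∑ i, (e i : ℕ) : ℕ) - c : ℤ) ∈ S :=
        mem_oddExponents_iff_of_applyNormal_ne_zero hw hc hz
      by_cases hd : d ∈ oddExponents ι S
      · rw [selectMonomials_monomial_of_mem hd, if_pos (hiff.1 hd)]
      · rw [selectMonomials_monomial_of_notMem hd, if_neg (mt hiff.2 hd), map_zero, Pi.zero_apply]

lemma orbitMap_selectMonomials_eq_zero {w : (ι → Fin N) → K} (hw : OddSupported w) {c : ℕ}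
    (hc : HasWeight w c) {f : MvPolynomial (ι ⊕ ι) K} (hf : orbitMap w f = 0) :
    orbitMap w (selectMonomials K (oddExponents ι S) f) = 0 := by
  ext σ e
  have h : applyNormal (permute K ι (Fin N) σ w) f = 0 := congrFun hf σ
  rw [orbitMap_apply, applyNormal_selectMonomials_apply (hw.permute σ) (hc.permute σ), h,
    Pi.zero_apply, ite_self]
  rfl

lemma testSpace_inf_leading_le [CharZero K] {w : (ι → Fin N) → K} (hw : OddSupported w) {c : ℕ}
    (hc : HasWeight w c) (m : ℕ) :
    (testSpace K S H ⊓ homogeneousSubmodule (ι ⊕ ι) K m) ⊓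
        leading (homogeneousSubmodule (ι ⊕ ι) K) (orbitMap w) m ≤
      leading (fun m => testSpace K S H ⊓ homogeneousSubmodule (ι ⊕ ι) K m) (orbitMap w) m := by
  classical
  let _ : Invertible (Fintype.card H : K) :=
    invertibleOfNonzero (Nat.cast_ne_zero.2 Fintype.card_ne_zero)
  let ρ : Representation K H (MvPolynomial (ι ⊕ ι) K) := (renameSites K ι).comp H.subtype
  refine inf_leading_le_leading_of_projection (φ := orbitMap w)
    (C := fun m => testSpace K S H ⊓ homogeneousSubmodule (ι ⊕ ι) K m)
    (ρ.averageMap ∘ₗ selectMonomials K (oddExponents ι S)) (fun m f hf => ?_) (fun m f hf => ?_)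
    (fun f hf => ?_) m
  · rw [homogeneousSubmodule_eq_finsupp_supported] at hf
    have hselect := selectMonomials_mem_restrictSupport_inter (s := oddExponents ι S) hf
    refine ⟨⟨averageMap_mem ρ (fun σ _ => renameSites_mem_restrictSupport_oddExponents _)
      (restrictSupport_mono K Set.inter_subset_left hselect), ρ.averageMap_invariant _⟩,
      averageMap_mem ρ (fun σ _ => renameSites_mem_homogeneousSubmodule _) ?_⟩
    rw [homogeneousSubmodule_eq_finsupp_supported]
    exact restrictSupport_mono K Set.inter_subset_right hselect
  · rw [LinearMap.comp_apply, selectMonomials_of_mem_restrictSupport hf.1.1,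
      ρ.averageMap_id f hf.1.2]
  · have hstable (σ : H) (g) (hg : g ∈ LinearMap.ker (orbitMap w)) :
        ρ σ g ∈ LinearMap.ker (orbitMap w) := orbitMap_renameSites_eq_zero hg σ
    exact averageMap_mem ρ hstable (orbitMap_selectMonomials_eq_zero hw hc hf)

end TestSpace

section Comparison

variable {ι β : Type*} [Fintype β] {k : ℕ} {blk : β × Fin k ≃ ι}

/-- The odd exponents `2 c + 1`, for `0 ≤ c < k`. -/
def doubleAddOne (c : Fin k) : Fin (2 * k + 1) := ⟨2 * c + 1, by omega⟩

lemma blockAlternant_doubleAddOne_comp_ne_zero {g : ι → Fin k}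
    (hg : ∀ a, Function.Injective fun j => g (blk (a, j))) :
    blockAlternant ℂ blk (doubleAddOne ∘ g) ≠ 0 := by
  have h : IsArrangement blk (fun a => .ofBijective _ (Finite.injective_iff_bijective.1 (hg a)))
      (doubleAddOne ∘ g) := fun _ _ => rfl
  rw [blockAlternant_apply h, Finset.prod_ne_zero_iff]
  exact fun a _ => Int.cast_ne_zero.2 (Units.ne_zero _)

variable (blk) in
lemma blockAlternant_ne_zero : blockAlternant ℂ blk ≠ 0 := by
  have h := blockAlternant_doubleAddOne_comp_ne_zero (blk := blk) (g := fun i => (blk.symm i).2)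
    fun a j j' h => by simpa using h
  exact fun h₀ => h (congrFun h₀ _)

variable [Fintype ι]

lemma hasWeight_blockAlternant : HasWeight (blockAlternant ℂ blk) (Fintype.card β * k ^ 2) :=
  fun _ he =>
    let ⟨_, hπ⟩ := isBlockAlternating_blockAlternant.exists_isArrangement
      oddSupported_blockAlternant he
    hπ.sum_eq

variable {N n : ℕ} [DecidableEq ι]

/-- The block alternant of a single block. -/
noncomputable abbrev alternant (n : ℕ) : (Fin n → Fin (2 * n + 1)) → ℂ :=
  blockAlternant ℂ (Equiv.punitProd.{0} (Fin n))

lemma permute_alternant (σ : Equiv.Perm (Fin n)) :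
    permute ℂ (Fin n) _ σ (alternant n) = ((Equiv.Perm.sign σ : ℤ) : ℂ) • alternant n := by
  have h : blockPerm (Equiv.punitProd.{0} (Fin n)) (fun _ => σ) = σ :=
    Equiv.ext fun i => blockPerm_apply _ _ () i
  simpa only [h, Finset.univ_unique, Finset.prod_singleton] using
    isBlockAlternating_blockAlternant (blk := Equiv.punitProd.{0} (Fin n)) fun _ => σ

lemma finrank_map_applyNormal_le (w : (ι → Fin N) → ℂ)
    (Q : Submodule ℂ (MvPolynomial (ι ⊕ ι) ℂ)) :
    finrank ℂ (Q.map (applyNormal w)) ≤ finrank ℂ (Q.map (orbitMap w)) := by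
  have h : applyNormal w = (LinearMap.proj 1).comp (orbitMap w) := by
    refine LinearMap.ext fun f => ?_
    rw [LinearMap.comp_apply, LinearMap.proj_apply, orbitMap_apply, map_one, Module.End.one_apply]
  rw [h, Submodule.map_comp]
  exact Submodule.finrank_map_le _ _

lemma finrank_map_orbitMap_alternant_le (Q : Submodule ℂ (MvPolynomial (Fin n ⊕ Fin n) ℂ)) :
    finrank ℂ (Q.map (orbitMap (alternant n))) ≤
      finrank ℂ (Q.map (applyNormal (alternant n))) := by
  have h : orbitMap (alternant n) = (LinearMap.pi fun σ =>
      ((Equiv.Perm.sign σ : ℤ) : ℂ) • LinearMap.id).comp (applyNormal (alternant n)) := by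
    refine LinearMap.ext fun f => funext fun σ => ?_
    rw [orbitMap_apply, permute_alternant, map_smul]
    rfl
  rw [h, Submodule.map_comp]
  exact Submodule.finrank_map_le _ _

attribute [local instance] MvPolynomial.gradedAlgebra

lemma finrank_range_orbitMap_add_le {β' : Type*} [Fintype β'] {k' : ℕ}
    (blk : β × Fin k ≃ Fin n) (blk' : β' × Fin k' ≃ Fin n) (S : Set ℤ)
    (H : Subgroup (Equiv.Perm (Fin n))) :
    finrank ℂ (LinearMap.range (orbitMap (blockAlternant ℂ blk))) +
        finrank ℂ ((testSpace ℂ S H).map (orbitMap (blockAlternant ℂ blk'))) ≤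
      finrank ℂ (MvPolynomial (Fin n ⊕ Fin n) ℂ ⧸ diagIdeal n) +
        finrank ℂ ((testSpace ℂ S H).map (orbitMap (blockAlternant ℂ blk))) := by
  have hcomponent (f : MvPolynomial (Fin n ⊕ Fin n) ℂ) (m : ℕ) :
      (decompose (homogeneousSubmodule (Fin n ⊕ Fin n) ℂ) f m : MvPolynomial _ ℂ) =
        homogeneousComponent m f := decomposition.decompose'_apply f m
  have : FiniteDimensional ℂ
      (MvPolynomial (Fin n ⊕ Fin n) ℂ ⧸ (diagIdeal n).restrictScalars ℂ) :=
    inferInstanceAs (FiniteDimensional ℂ (MvPolynomial (Fin n ⊕ Fin n) ℂ ⧸ diagIdeal n))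
  refine finrank_range_add_finrank_map_le (I := (diagIdeal n).restrictScalars ℂ)
    (B := homogeneousSubmodule (Fin n ⊕ Fin n) ℂ) (fun f hf m => ?_) (fun f hf m => ?_)
    (fun f hf m => ?_)
    (testSpace_inf_leading_le oddSupported_blockAlternant hasWeight_blockAlternant)
  · rw [hcomponent]
    exact mem_leadingPolynomials.1 (diagIdeal_le_leadingPolynomials blk hf) m
  · rw [hcomponent]
    exact mem_leadingPolynomials.1 (diagIdeal_le_leadingPolynomials blk' hf) m
  · rw [hcomponent]
    exact homogeneousComponent_mem_testSpace hf m

lemma pow_le_finrank_range_orbitMap (n : ℕ) :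
    (2 * n + 1) ^ n ≤ finrank ℂ (LinearMap.range (orbitMap (alternant n))) := by
  have h := finrank_map_applyNormal_le (alternant n) ⊤
  rw [Submodule.map_top, Submodule.map_top, LinearMap.range_eq_top.2
    (applyNormal_surjective (blockAlternant_ne_zero (Equiv.punitProd (Fin n)))), finrank_top,
    Module.finrank_fintype_fun_eq_card, Fintype.card_fun, Fintype.card_fin, Fintype.card_fin] at h
  exact h

theorem pow_le_finrank_quotient_diagIdeal (n : ℕ) :
    (2 * n + 1) ^ n ≤ finrank ℂ (MvPolynomial (Fin n ⊕ Fin n) ℂ ⧸ diagIdeal n) :=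
  (pow_le_finrank_range_orbitMap n).trans <| Nat.le_of_add_le_add_right <|
    finrank_range_orbitMap_add_le (Equiv.punitProd (Fin n)) (Equiv.punitProd (Fin n)) ∅ ⊤

theorem pow_add_finrank_map_applyNormal_le (blk : β × Fin k ≃ Fin n) (S : Set ℤ)
    (H : Subgroup (Equiv.Perm (Fin n))) :
    (2 * n + 1) ^ n + finrank ℂ ((testSpace ℂ S H).map (applyNormal (blockAlternant ℂ blk))) ≤
      finrank ℂ (MvPolynomial (Fin n ⊕ Fin n) ℂ ⧸ diagIdeal n) +
        finrank ℂ ((testSpace ℂ S H).map (applyNormal (alternant n))) :=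
  (Nat.add_le_add (pow_le_finrank_range_orbitMap n) (finrank_map_applyNormal_le _ _)).trans <|
    (finrank_range_orbitMap_add_le (Equiv.punitProd (Fin n)) blk S H).trans <|
      Nat.add_le_add_left (finrank_map_orbitMap_alternant_le _) _

end Comparison

/-! ### The image of the one-block alternant -/

section OneBlock

lemma finrank_le_ncard_of_rel {K X J : Type*} [Field K] [Finite J] {V : Submodule K (X → K)}
    {T : Set J} (R : X → J → Prop) (hV : ∀ F ∈ V, ∀ x, F x ≠ 0 → ∃ j ∈ T, R x j)
    (hR : ∀ F ∈ V, ∀ x y j, R x j → R y j → F x = 0 → F y = 0) : finrank K V ≤ T.ncard := by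
  classical
  have := Fintype.ofFinite J
  let evalRep : (X → K) →ₗ[K] T → K := LinearMap.pi fun j =>
    if h : ∃ x, R x j then LinearMap.proj h.choose else 0
  have hinj : Function.Injective (evalRep ∘ₗ V.subtype) := by
    refine (injective_iff_map_eq_zero _).2 fun F hF => Subtype.ext (funext fun x => ?_)
    by_contra hx
    obtain ⟨j, hj, hxj⟩ := hV F F.2 x hx
    have hex : ∃ x, R x j := ⟨x, hxj⟩
    have hzero : evalRep F ⟨j, hj⟩ = 0 := congrFun hF _
    rw [LinearMap.pi_apply, dif_pos hex] at hzero
    exact hx (hR F F.2 _ x j hex.choose_spec hxj hzero)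
  have h := LinearMap.finrank_le_finrank_of_injective hinj
  rwa [Module.finrank_fintype_fun_eq_card, ← Nat.card_eq_fintype_card, Nat.card_coe_set_eq] at h

lemma exists_perm_comp_eq {ι α : Type*} {f g : ι → α} {i₀ : ι} (h₀ : g i₀ = f i₀)
    (hf : Set.InjOn f {i₀}ᶜ) (hg : Set.InjOn g {i₀}ᶜ) (h : g '' {i₀}ᶜ = f '' {i₀}ᶜ) :
    ∃ σ : Equiv.Perm ι, σ i₀ = i₀ ∧ g = f ∘ σ := by
  classical
  let σ : Equiv.Perm ({i₀}ᶜ : Set ι) :=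
    (hg.bijOn_image.equiv g).trans ((Equiv.setCongr h).trans (hf.bijOn_image.equiv f).symm)
  have hσ (i : ({i₀}ᶜ : Set ι)) : f (σ i) = g i :=
    congrArg Subtype.val ((hf.bijOn_image.equiv f).apply_symm_apply _)
  have hfix : Equiv.Perm.ofSubtype σ i₀ = i₀ :=
    Equiv.Perm.ofSubtype_apply_of_not_mem σ fun h => h rfl
  refine ⟨Equiv.Perm.ofSubtype σ, hfix, funext fun i => ?_⟩
  rcases eq_or_ne i i₀ with rfl | hi
  · rw [Function.comp_apply, hfix, h₀]
  · rw [Function.comp_apply, Equiv.Perm.ofSubtype_apply_of_mem σ hi, hσ]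

/-- The even exponents `2 t`, for `0 ≤ t ≤ k`. -/
def double {k : ℕ} (t : Fin (k + 1)) : Fin (2 * k + 1) := ⟨2 * t, by omega⟩

lemma double_injective {k : ℕ} : Function.Injective (double (k := k)) := fun t t' h => by
  rw [Fin.ext_iff] at h ⊢
  exact Nat.eq_of_mul_eq_mul_left two_pos h

lemma exists_double_comp_eq {ι : Type*} {k : ℕ} {e : ι → Fin (2 * k + 1)}
    (he : ∀ i, Even (e i : ℕ)) : ∃ γ : ι → Fin (k + 1), double ∘ γ = e := by
  choose γ hγ using he
  exact ⟨fun i => ⟨γ i, by have := hγ i; omega⟩, funext fun i => Fin.ext <| by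
    rw [hγ]; exact two_mul _⟩

lemma sum_double (k : ℕ) : ∑ t : Fin (k + 1), (double t : ℕ) = k * (k + 1) := by
  have h := Finset.sum_range_id_mul_two (k + 1)
  rw [Finset.sum_range, mul_comm, Finset.mul_sum, mul_comm] at h
  exact h

variable {n : ℕ} {i₀ : Fin n} {S : Set ℤ}

/-- The vectors of even exponents are, up to permutations fixing `i₀`, the triples `(q, r, s)`
with `q < r`: the exponent at `i₀` is `2 s`, the other ones are all but `2 q` and `2 r`. -/
def oneBlockIndex (n : ℕ) (S : Set ℤ) : Set (Fin (n + 1) × Fin (n + 1) × Fin (n + 1)) :=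
  {x | x.1 < x.2.1 ∧ (n - 2 * x.1 - 2 * x.2.1 + 2 * x.2.2 : ℤ) ∈ S}

/-- The exponents `e` belong to the triple `(q, r, s)`. -/
structure HasShape (i₀ : Fin n) (e : Fin n → Fin (2 * n + 1))
    (x : Fin (n + 1) × Fin (n + 1) × Fin (n + 1)) : Prop where
  apply_eq : e i₀ = double x.2.2
  injOn : Set.InjOn e {i₀}ᶜ
  image_eq : e '' {i₀}ᶜ = double '' {x.1, x.2.1}ᶜ

lemma exists_hasShape {e : Fin n → Fin (2 * n + 1)} (he : ∀ i, Even (e i : ℕ))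
    (hinj : Set.InjOn e {i₀}ᶜ) : ∃ x : Fin (n + 1) × Fin (n + 1) × Fin (n + 1),
      x.1 < x.2.1 ∧ HasShape i₀ e x ∧
        (∑ i, (e i : ℕ) : ℕ) + (2 * x.1 + 2 * x.2.1 : ℤ) = n * (n + 1) + 2 * x.2.2 := by
  obtain ⟨γ, rfl⟩ := exists_double_comp_eq he
  have hγ : Set.InjOn γ {i₀}ᶜ := hinj.of_comp
  have hn : 0 < n := i₀.pos
  set T : Finset (Fin (n + 1)) := ({i₀}ᶜ : Finset (Fin n)).image γ with hT
  have hcard : Tᶜ.card = 2 := by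
    rw [Finset.card_compl, Finset.card_image_of_injOn (by simpa using hγ), Finset.card_compl,
      Finset.card_singleton, Fintype.card_fin, Fintype.card_fin]
    omega
  obtain ⟨q, r, hqr, hTc⟩ : ∃ q r, q < r ∧ Tᶜ = {q, r} := by
    obtain ⟨q, r, hne, h⟩ := Finset.card_eq_two.1 hcard
    rcases hne.lt_or_gt with hlt | hlt
    · exact ⟨q, r, hlt, h⟩
    · exact ⟨r, q, hlt, h.trans (Finset.pair_comm q r)⟩
  refine ⟨(q, r, γ i₀), hqr, ⟨rfl, hinj, ?_⟩, ?_⟩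
  · have hTq : T = {q, r}ᶜ := by rw [← hTc, compl_compl]
    have h : γ '' {i₀}ᶜ = ({q, r}ᶜ : Set (Fin (n + 1))) := by
      rw [← Finset.coe_pair, ← Finset.coe_compl, ← hTq, hT, Finset.coe_image, Finset.coe_compl,
        Finset.coe_singleton]
    rw [Set.image_comp, h]
  · have h₁ := Finset.sum_add_sum_compl T fun t => (double t : ℕ)
    rw [hTc, Finset.sum_pair hqr.ne, sum_double, hT,
      Finset.sum_image (by simpa using hγ)] at h₁
    have h₂ := Fintype.sum_eq_add_sum_compl i₀ fun i => ((double (γ i) : Fin _) : ℕ)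
    simp only [Function.comp_apply, double] at h₁ h₂ ⊢
    zify at h₁ h₂
    push_cast
    linarith

/-- The image of the alternant under the test polynomials invariant under the permutations
fixing `i₀`. -/
noncomputable abbrev alternantSpace (i₀ : Fin n) (S : Set ℤ) :
    Submodule ℂ ((Fin n → Fin (2 * n + 1)) → ℂ) :=
  (testSpace ℂ S (MulAction.stabilizer (Equiv.Perm (Fin n)) i₀)).map (applyNormal (alternant n))

namespace alternantSpace

variable {F : (Fin n → Fin (2 * n + 1)) → ℂ}

lemma apply_comp_perm (hF : F ∈ alternantSpace i₀ S) {σ : Equiv.Perm (Fin n)} (hσ : σ i₀ = i₀)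
    (e : Fin n → Fin (2 * n + 1)) : F (e ∘ σ) = ((Equiv.Perm.sign σ : ℤ) : ℂ) * F e := by
  obtain ⟨f, hf, rfl⟩ := hF
  have hfσ : renameSites ℂ (Fin n) σ f = f := hf.2 ⟨σ, hσ⟩
  have h := applyNormal_permute_renameSites σ (alternant n) f
  rw [hfσ, permute_alternant, map_smul] at h
  exact (congrFun h e).symm

lemma injOn (hF : F ∈ alternantSpace i₀ S) {e : Fin n → Fin (2 * n + 1)} (he : F e ≠ 0) :
    Set.InjOn e {i₀}ᶜ := by
  intro i hi j hj hij
  by_contra hne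
  have hswap : e ∘ Equiv.swap i j = e := by
    rw [Equiv.comp_swap_eq_update, hij, Function.update_eq_self, ← hij, Function.update_eq_self]
  have h := apply_comp_perm hF
    (Equiv.swap_apply_of_ne_of_ne (Ne.symm hi) (Ne.symm hj)) e
  rw [hswap, Equiv.Perm.sign_swap hne] at h
  exact he (self_eq_neg.1 (by simpa using h))

lemma even_and_mem (hF : F ∈ alternantSpace i₀ S) {e : Fin n → Fin (2 * n + 1)}
    (he : F e ≠ 0) :
    (∀ i, Even (e i : ℕ)) ∧ ((∑ i, (e i : ℕ) : ℕ) - n ^ 2 : ℤ) ∈ S := by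
  obtain ⟨f, hf, rfl⟩ := hF
  have h := applyNormal_selectMonomials_apply (S := S) oddSupported_blockAlternant
    (hasWeight_blockAlternant (blk := Equiv.punitProd.{0} (Fin n))) f e
  rw [selectMonomials_of_mem_restrictSupport hf.1] at h
  by_contra hnot
  rw [if_neg (by simpa using hnot)] at h
  exact he h

theorem finrank_le (S : Set ℤ) (i₀ : Fin n) :
    finrank ℂ (alternantSpace i₀ S) ≤ (oneBlockIndex n S).ncard := by
  refine finrank_le_ncard_of_rel (HasShape i₀) (fun F hF e he => ?_)
    fun F hF e e' x hx hx' he => ?_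
  · obtain ⟨heven, hS⟩ := even_and_mem hF he
    obtain ⟨x, hlt, hx, hsum⟩ := exists_hasShape heven (injOn hF he)
    refine ⟨x, ⟨hlt, ?_⟩, hx⟩
    convert hS using 1
    linarith
  · obtain ⟨σ, hσ, rfl⟩ := exists_perm_comp_eq (hx'.apply_eq.trans hx.apply_eq.symm) hx.injOn
      hx'.injOn (hx'.image_eq.trans hx.image_eq.symm)
    rw [apply_comp_perm hF hσ, he, mul_zero]

end alternantSpace

end OneBlock

section LowerBound

variable {K ι J : Type*} [Field K] [CharZero K] [Fintype ι] [DecidableEq ι] [Finite J] {N c : ℕ}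
  {w : (ι → Fin N) → K} {S : Set ℤ} {H : Subgroup (Equiv.Perm ι)}

lemma sum_single_mem_map_testSpace (hw : OddSupported w) (hc : HasWeight w c) {t : ι → Fin N}
    (ht : ∀ i, Even (t i : ℕ)) (hS : ((∑ i, (t i : ℕ) : ℕ) - c : ℤ) ∈ S) (o : ι → Fin N)
    [Fintype H] :
    ∑ σ : H, Pi.single (t ∘ σ) (w (o ∘ σ)) ∈ (testSpace K S H).map (applyNormal w) := by
  let ρ : Representation K H (MvPolynomial (ι ⊕ ι) K) := (renameSites K ι).comp H.subtype
  obtain ⟨f, hf⟩ := exists_applyNormal_eq_single (K := K) t o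
  have hselect (σ : Equiv.Perm ι) : applyNormal (permute K ι (Fin N) σ w)
      (selectMonomials K (oddExponents ι S) f) = Pi.single t (w (o ∘ σ)) := by
    ext1 e
    rw [applyNormal_selectMonomials_apply (hw.permute σ) (hc.permute σ), hf, permute_apply]
    by_cases he : e = t
    · rw [if_pos (he ▸ ⟨ht, hS⟩)]
    · rw [Pi.single_eq_of_ne he, ite_self]
  have hrestrict : selectMonomials K (oddExponents ι S) f ∈
      restrictSupport K (oddExponents ι S) :=
    restrictSupport_mono K Set.inter_subset_left
      (selectMonomials_mem_restrictSupport_inter (t := Set.univ) fun _ _ => Set.mem_univ _)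
  refine ⟨ρ.norm (selectMonomials K (oddExponents ι S) f), ⟨?_, fun σ => ?_⟩, ?_⟩
  · rw [Representation.norm, LinearMap.sum_apply]
    exact Submodule.sum_mem _ fun σ _ =>
      renameSites_mem_restrictSupport_oddExponents (σ : Equiv.Perm ι) hrestrict
  · exact ρ.self_norm_apply σ _
  · rw [Representation.norm, LinearMap.sum_apply, map_sum, ← Equiv.sum_comp (Equiv.inv H)]
    refine Finset.sum_congr rfl fun σ _ => ?_
    have h := applyNormal_renameSites (σ⁻¹ : Equiv.Perm ι) w
      (selectMonomials K (oddExponents ι S) f)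
    rw [inv_inv, hselect] at h
    refine h.trans (funext fun e => ?_)
    have heq : e ∘ (σ⁻¹ : Equiv.Perm ι) = t ↔ e = t ∘ σ := by
      rw [Equiv.Perm.inv_def, Equiv.comp_symm_eq]
    simp only [permute_apply, Pi.single_apply, heq]

lemma natCard_le_finrank_map_testSpace (hw : OddSupported w) (hc : HasWeight w c)
    {t o : J → ι → Fin N} (ht : ∀ x i, Even (t x i : ℕ))
    (hS : ∀ x, ((∑ i, (t x i : ℕ) : ℕ) - c : ℤ) ∈ S) (ho : ∀ x, w (o x) ≠ 0)
    (hstab : ∀ x, ∀ σ ∈ H, t x ∘ σ = t x → o x ∘ σ = o x)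
    (hsep : ∀ x y, ∀ σ ∈ H, t x ∘ σ = t y → w (o x ∘ σ) ≠ 0 → x = y) :
    Nat.card J ≤ finrank K ((testSpace K S H).map (applyNormal w)) := by
  classical
  have := Fintype.ofFinite J
  let v (x : J) : (ι → Fin N) → K := ∑ σ : H, Pi.single (t x ∘ σ) (w (o x ∘ σ))
  have hv (x y : J) : v x (t y) = ∑ σ : H, if t x ∘ σ = t y then w (o x ∘ σ) else 0 := by
    refine (Finset.sum_apply _ _ _).trans (Finset.sum_congr rfl fun σ _ => ?_)
    simp only [Pi.single_apply, eq_comm]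
  have hoff (x y : J) (hxy : x ≠ y) : v x (t y) = 0 := by
    rw [hv]
    refine Finset.sum_eq_zero fun σ _ => ite_eq_right_iff.2 fun h => ?_
    by_contra hne
    exact hxy (hsep x y σ σ.2 h hne)
  have hdiag (x : J) : v x (t x) ≠ 0 := by
    have h (σ : H) : (if t x ∘ σ = t x then w (o x ∘ σ) else 0) =
        if t x ∘ σ = t x then w (o x) else 0 :=
      ite_congr rfl (fun h => congrArg w (hstab x σ σ.2 h)) fun _ => rfl
    rw [hv, Fintype.sum_congr _ _ h, ← Finset.sum_filter, Finset.sum_const, nsmul_eq_mul]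
    exact mul_ne_zero (Nat.cast_ne_zero.2 (Finset.card_ne_zero_of_mem (a := 1) (by simp))) (ho x)
  have hind : LinearIndependent K v := by
    refine Fintype.linearIndependent_iff.2 fun a ha y => ?_
    have h := congrFun ha (t y)
    rw [Finset.sum_apply, Finset.sum_eq_single y (fun x _ hx => by
      rw [Pi.smul_apply, hoff x y hx, smul_zero]) (by simp)] at h
    exact (mul_eq_zero.1 h).resolve_right (hdiag y)
  rw [Nat.card_eq_fintype_card, ← finrank_span_eq_card hind]
  refine Submodule.finrank_mono (Submodule.span_le.2 ?_)
  rintro _ ⟨x, rfl⟩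
  exact sum_single_mem_map_testSpace hw hc (ht x) (hS x) (o x)

end LowerBound

/-! ### The image of the two-block alternant -/

section TwoBlocks

section Filling

variable {ι β : Type*} {k : ℕ} (blk : β × Fin k ≃ ι)

/-- The filling of the sites by elements of `Fin (k + 1)` which enumerates, in each block `a`,
all the values but `m a`, in the order given by `π a`. -/
def filling (m : β → Fin (k + 1)) (π : β → Equiv.Perm (Fin k)) (i : ι) : Fin (k + 1) :=
  (m (blk.symm i).1).succAbove (π (blk.symm i).1 (blk.symm i).2)

variable {blk} {m : β → Fin (k + 1)} {π : β → Equiv.Perm (Fin k)}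

lemma filling_apply (a : β) (j : Fin k) :
    filling blk m π (blk (a, j)) = (m a).succAbove (π a j) := by
  simp only [filling, Equiv.symm_apply_apply]

lemma exists_filling_apply_eq {a : β} {r : Fin (k + 1)} (hr : r ≠ m a) (j : Fin k) :
    ∃ π, filling blk m π (blk (a, j)) = r := by
  obtain ⟨c, rfl⟩ := Fin.exists_succAbove_eq hr
  exact ⟨fun _ => Equiv.swap j c, by rw [filling_apply, Equiv.swap_apply_left]⟩

lemma sum_filling [Fintype ι] [Fintype β] (F : Fin (k + 1) → ℤ) :
    ∑ i, F (filling blk m π i) = Fintype.card β * ∑ t, F t - ∑ a, F (m a) := by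
  have h (a : β) : ∑ j, F ((m a).succAbove (π a j)) = ∑ t, F t - F (m a) := by
    rw [Equiv.sum_comp (π a) fun j => F ((m a).succAbove j), Fin.sum_univ_succAbove F (m a)]
    ring
  rw [← blk.sum_comp, Fintype.sum_prod_type]
  simp only [filling_apply, h, Finset.sum_sub_distrib, Finset.sum_const, Finset.card_univ,
    nsmul_eq_mul]

lemma injective_comp_filling {γ : Type*} {g : Fin (k + 1) → γ} {a : β}
    (hg : Set.InjOn g {m a}ᶜ) :
    Function.Injective fun j => g (filling blk m π (blk (a, j))) := fun j j' h => by
  simp only [filling_apply] at h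
  exact (π a).injective (Fin.succAbove_right_injective
    (hg (Fin.succAbove_ne _ _) (Fin.succAbove_ne _ _) h))

end Filling

lemma exists_collapse {k : ℕ} [NeZero k] (p q : Fin (k + 1)) :
    ∃ g : Fin (k + 1) → Fin k, g p = g q ∧ Set.InjOn g {p}ᶜ ∧ Set.InjOn g {q}ᶜ := by
  let g : Fin (k + 1) → Fin k := Function.invFun p.succAbove
  have hg : Set.InjOn (Function.update g p (g q)) {p}ᶜ := by
    intro x hx y hy h
    rw [Function.update_of_ne hx, Function.update_of_ne hy] at h
    obtain ⟨c, rfl⟩ := Fin.exists_succAbove_eq hx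
    obtain ⟨d, rfl⟩ := Fin.exists_succAbove_eq hy
    have hinv := Function.leftInverse_invFun (Fin.succAbove_right_injective (p := p))
    rw [show c = d from (hinv c).symm.trans (h.trans (hinv d))]
  have hpq : Function.update g p (g q) p = Function.update g p (g q) q := by
    rw [Function.update_self, Function.update_apply, ite_self]
  refine ⟨_, hpq, hg, fun x hx y hy h => ?_⟩
  have hswap (z) : Function.update g p (g q) (Equiv.swap p q z) = Function.update g p (g q) z := by
    rw [Equiv.swap_apply_def]
    split_ifs with h₁ h₂
    · rw [h₁, hpq]
    · rw [h₂, hpq]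
    · rfl
  rw [← hswap x, ← hswap y] at h
  have hne {z} (hz : z ∈ ({q}ᶜ : Set _)) : Equiv.swap p q z ∈ ({p}ᶜ : Set _) := fun hz' =>
    hz ((Equiv.swap_apply_eq_iff.1 hz').trans (Equiv.swap_apply_left p q))
  exact (Equiv.swap p q).injective (hg (hne hx) (hne hy) h)

section Update

variable {ι α : Type*} [DecidableEq ι] {i₀ : ι} {f g : ι → α} {s s' : α}

lemma comp_eq_update_of_update_comp_eq {σ : Equiv.Perm ι} (hσ : σ i₀ = i₀)
    (h : Function.update f i₀ s ∘ σ = Function.update g i₀ s') :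
    s = s' ∧ f ∘ σ = Function.update g i₀ (f i₀) := by
  have hsymm : σ.symm i₀ = i₀ := σ.symm_apply_eq.2 hσ.symm
  rw [Function.update_comp_equiv, hsymm] at h
  refine ⟨by simpa using congrFun h i₀, ?_⟩
  have h' := congrArg (fun u => Function.update u i₀ (f i₀)) h
  rwa [Function.update_idem, Function.update_idem,
    Function.update_eq_self_iff.2 (congrArg f hσ.symm)] at h'

lemma sum_update_apply [Fintype ι] (F : α → ℤ) (f : ι → α) (i₀ : ι) (s : α) :
    ∑ i, F (Function.update f i₀ s i) = ∑ i, F (f i) - F (f i₀) + F s := by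
  have h := Finset.sum_update_of_mem (Finset.mem_univ i₀) (F ∘ f) (F s)
  have h' := Finset.sum_sdiff (Finset.subset_univ {i₀}) (f := F ∘ f)
  rw [Finset.sum_singleton] at h'
  rw [← Function.comp_update] at h
  simp only [Function.comp_apply] at h h'
  linarith

end Update

/-- The indices of the independent vectors found in the image of the alternant of two blocks of
size `k`: the blocks are filled with all the values but `p`, respectively `q`, and the value `r`
in the second one is replaced by `s`. -/
def twoBlockIndex (k : ℕ) (S : Set ℤ) :
    Set (Fin (k + 1) × Fin (k + 1) × Fin (k + 1) × Fin (k + 1)) :=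
  {x | x.2.1 < x.2.2.1 ∧ x.2.1 ≤ x.1 ∧
    (2 * k - 2 * (x.1 + x.2.1 + x.2.2.1) + 2 * x.2.2.2 : ℤ) ∈ S}

lemma smallest_eq_of_sum_eq {α : Type*} [LinearOrder α] {p q r p' q' r' : α} (hqr : q < r)
    (hqp : q ≤ p) (hqr' : q' < r') (hqp' : q' ≤ p')
    (h : ∀ F : α → ℤ, F p + F q + F r = F p' + F q' + F r') : q = q' := by
  have h₁ := h fun y => if y = q then 1 else 0
  have h₂ := h fun y => if y = q' then 1 else 0
  clear h
  grind

lemma triple_eq_of_sum_eq {α : Type*} [LinearOrder α] {p q r p' q' r' : α} (hqr : q < r)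
    (hqp : q ≤ p) (hqr' : q' < r') (hqp' : q' ≤ p')
    (h : ∀ F : α → ℤ, F p + F q + F r = F p' + F q' + F r') (hp : p = q ∨ p' = p ∨ p' = q) :
    p = p' ∧ q = q' ∧ r = r' := by
  obtain rfl := smallest_eq_of_sum_eq hqr hqp hqr' hqp' h
  have h₁ := h fun y => if y = p then 1 else 0
  have h₂ := h fun y => if y = r then 1 else 0
  have h₃ := h fun y => if y = r' then 1 else 0
  clear h
  grind

variable {k : ℕ} {ι : Type*}

/-- A filling `b` of two blocks by all the values but `p`, respectively `q`, with the value `r` at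
the site `(1, j₀)`, and a map `g` which identifies only `p` and `q`, where `x = (p, q, r, s)`. -/
structure IsTwoBlockFilling (blk : Fin 2 × Fin k ≃ ι) (j₀ : Fin k)
    (x : Fin (k + 1) × Fin (k + 1) × Fin (k + 1) × Fin (k + 1)) (b : ι → Fin (k + 1))
    (g : Fin (k + 1) → Fin k) : Prop where
  exists_eq_filling : ∃ π, b = filling blk ![x.1, x.2.1] π
  apply_eq : b (blk (1, j₀)) = x.2.2.1
  collapse_eq : g x.1 = g x.2.1
  injOn_left : Set.InjOn g {x.1}ᶜ
  injOn_right : Set.InjOn g {x.2.1}ᶜ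

variable {blk : Fin 2 × Fin k ≃ ι} {j₀ : Fin k}
  {x y : Fin (k + 1) × Fin (k + 1) × Fin (k + 1) × Fin (k + 1)}

lemma exists_isTwoBlockFilling (blk : Fin 2 × Fin k ≃ ι) (j₀ : Fin k) (hx : x.2.1 < x.2.2.1) :
    ∃ b g, IsTwoBlockFilling blk j₀ x b g := by
  have : NeZero k := ⟨j₀.pos.ne'⟩
  obtain ⟨g, h, hp, hq⟩ := exists_collapse x.1 x.2.1
  obtain ⟨π, hπ⟩ := exists_filling_apply_eq (blk := blk) (m := ![x.1, x.2.1]) (a := 1) hx.ne' j₀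
  exact ⟨_, g, ⟨π, rfl⟩, hπ, h, hp, hq⟩

namespace IsTwoBlockFilling

variable {b b' : ι → Fin (k + 1)} {g g' : Fin (k + 1) → Fin k}

lemma injective (h : IsTwoBlockFilling blk j₀ x b g) (a : Fin 2) :
    Function.Injective fun j => g (b (blk (a, j))) := by
  obtain ⟨π, rfl⟩ := h.exists_eq_filling
  refine injective_comp_filling ?_
  fin_cases a
  exacts [h.injOn_left, h.injOn_right]

lemma left_eq_or_eq (h : IsTwoBlockFilling blk j₀ x b g) (hg : g' y.1 = g' y.2.1)
    (hinj : Function.Injective fun j => g' (b (blk (0, j)))) :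
    y.1 = y.2.1 ∨ x.1 = y.1 ∨ x.1 = y.2.1 := by
  by_contra! hne
  obtain ⟨hpq, hp, hq⟩ := hne
  obtain ⟨π, rfl⟩ := h.exists_eq_filling
  obtain ⟨c, hc⟩ := Fin.exists_succAbove_eq hp.symm
  obtain ⟨d, hd⟩ := Fin.exists_succAbove_eq hq.symm
  have hcd : (π 0).symm c = (π 0).symm d := hinj (by
    simpa only [filling_apply, Equiv.apply_symm_apply, Matrix.cons_val_zero, hc, hd] using hg)
  rw [← hc, ← hd, (π 0).symm.injective hcd] at hpq
  exact hpq rfl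

lemma sum_eq [Fintype ι] (h : IsTwoBlockFilling blk j₀ x b g) (F : Fin (k + 1) → ℤ) :
    ∑ i, F (b i) = 2 * ∑ t, F t - (F x.1 + F x.2.1) := by
  obtain ⟨π, rfl⟩ := h.exists_eq_filling
  simpa [Fin.sum_univ_two] using sum_filling (blk := blk) (m := ![x.1, x.2.1]) (π := π) F

variable [DecidableEq ι]

lemma sum_double_update [Fintype ι] (h : IsTwoBlockFilling blk j₀ x b g) :
    ((∑ i, (double (Function.update b (blk (1, j₀)) x.2.2.2 i) : ℕ) : ℕ) : ℤ) =
      2 * (k * (k + 1)) - 2 * (x.1 + x.2.1 + x.2.2.1) + 2 * x.2.2.2 := by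
  have h₁ := sum_update_apply (fun t => ((double t : ℕ) : ℤ)) b (blk (1, j₀)) x.2.2.2
  have h₂ := congrArg (Nat.cast (R := ℤ)) (sum_double k)
  rw [h.sum_eq fun t => ((double t : ℕ) : ℤ), h.apply_eq, ← Nat.cast_sum, ← Nat.cast_sum, h₂] at h₁
  rw [h₁]
  simp only [double]
  push_cast
  ring

lemma eq_of_comp_eq [Finite ι] (hx : IsTwoBlockFilling blk j₀ x b g)
    (hy : IsTwoBlockFilling blk j₀ y b' g')
    (hxlt : x.2.1 < x.2.2.1) (hxle : x.2.1 ≤ x.1) (hylt : y.2.1 < y.2.2.1) (hyle : y.2.1 ≤ y.1)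
    {σ : Equiv.Perm ι} (hσ : b ∘ σ = Function.update b' (blk (1, j₀)) x.2.2.1)
    (hne : blockAlternant ℂ blk (doubleAddOne ∘ g ∘ b ∘ σ) ≠ 0) :
    x.1 = y.1 ∧ x.2.1 = y.2.1 ∧ x.2.2.1 = y.2.2.1 := by
  have := Fintype.ofFinite ι
  refine triple_eq_of_sum_eq hxlt hxle hylt hyle (fun F => ?_)
    (hy.left_eq_or_eq hx.collapse_eq (Function.Injective.of_comp (f := doubleAddOne) ?_))
  · have h := sum_update_apply F b' (blk (1, j₀)) x.2.2.1
    rw [← hσ, hy.sum_eq, hy.apply_eq] at h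
    have h' := (Equiv.sum_comp σ fun i => F (b i)).trans (hx.sum_eq F)
    simp only [Function.comp_apply] at h
    linarith
  · have h := isBlockAlternating_blockAlternant.injective_of_apply_ne_zero hne 0
    have hoff (j) : blk (0, j) ≠ blk (1, j₀) := fun h => by simpa using blk.injective h
    simpa only [hσ, Function.comp_def, Function.update_of_ne (hoff _)] using h

end IsTwoBlockFilling

variable [Fintype ι] [DecidableEq ι]

theorem ncard_twoBlockIndex_le (blk : Fin 2 × Fin k ≃ ι) (j₀ : Fin k) (S : Set ℤ) :
    (twoBlockIndex k S).ncard ≤ finrank ℂ ((testSpace ℂ S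
      (MulAction.stabilizer (Equiv.Perm ι) (blk (1, j₀)))).map
        (applyNormal (blockAlternant ℂ blk))) := by
  choose b g hbg using fun x : twoBlockIndex k S => exists_isTwoBlockFilling blk j₀ x.2.1
  let t (x : twoBlockIndex k S) := Function.update (b x) (blk (1, j₀)) x.1.2.2.2
  have hcomp {x y} {σ : Equiv.Perm ι} (hσ : σ (blk (1, j₀)) = blk (1, j₀))
      (h : (double ∘ t x) ∘ σ = double ∘ t y) :
      x.1.2.2.2 = y.1.2.2.2 ∧ b x ∘ σ = Function.update (b y) (blk (1, j₀)) x.1.2.2.1 := by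
    rw [← (hbg x).apply_eq]
    exact comp_eq_update_of_update_comp_eq hσ (double_injective.comp_left h)
  rw [← Nat.card_coe_set_eq]
  refine natCard_le_finrank_map_testSpace (t := fun x => double ∘ t x)
    (o := fun x => doubleAddOne ∘ g x ∘ b x) oddSupported_blockAlternant hasWeight_blockAlternant
    (fun x i => even_two_mul _) (fun x => ?_)
    (fun x => blockAlternant_doubleAddOne_comp_ne_zero (hbg x).injective) (fun x σ hσ h => ?_)
    fun x y σ hσ h hne => ?_
  · convert x.2.2.2 using 1
    simp only [t, Function.comp_apply, (hbg x).sum_double_update, Fintype.card_fin]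
    push_cast
    ring
  · have h' := (hcomp hσ h).2
    rw [← (hbg x).apply_eq, Function.update_eq_self] at h'
    rw [Function.comp_assoc, Function.comp_assoc, h']
  · obtain ⟨hs, h'⟩ := hcomp hσ h
    obtain ⟨hp, hq, hr⟩ := (hbg x).eq_of_comp_eq (hbg y) x.2.1 x.2.2.1 y.2.1 y.2.2.1 h' hne
    exact Subtype.ext (Prod.ext hp (Prod.ext hq (Prod.ext hr hs)))

theorem pow_add_ncard_twoBlockIndex_le {k : ℕ} (hk : 0 < k) (S : Set ℤ) :
    (2 * (2 * k) + 1) ^ (2 * k) + (twoBlockIndex k S).ncard ≤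
      finrank ℂ (MvPolynomial (Fin (2 * k) ⊕ Fin (2 * k)) ℂ ⧸ diagIdeal (2 * k)) +
        (oneBlockIndex (2 * k) S).ncard :=
  (Nat.add_le_add_left (ncard_twoBlockIndex_le finProdFinEquiv ⟨0, hk⟩ S) _).trans <|
    (pow_add_finrank_map_applyNormal_le _ S _).trans <|
      Nat.add_le_add_left (alternantSpace.finrank_le S _) _

end TwoBlocks

/-! ### Comparison of the counts -/

section Counting

lemma ncard_setOf_eq_sum {α : Type*} [Fintype α] (p : α → Prop) [DecidablePred p] :
    {x | p x}.ncard = ∑ x, if p x then 1 else 0 := by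
  classical
  rw [Finset.sum_boole, ← Set.ncard_coe_finset, Finset.coe_filter_univ, Nat.cast_id]

lemma ncard_oneBlockIndex_Icc (k : ℕ) :
    (oneBlockIndex (2 * k) (Set.Icc (-2) 2)).ncard =
      ∑ x : Fin (2 * k + 1) × Fin (2 * k + 1) × Fin (2 * k + 1),
        if x.1 < x.2.1 ∧ (x.1 + x.2.1 : ℕ) ≤ k + x.2.2 + 1 ∧ (k + x.2.2 : ℕ) ≤ x.1 + x.2.1 + 1
        then 1 else 0 := by
  rw [← ncard_setOf_eq_sum, oneBlockIndex]
  congr! with x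
  rw [Set.mem_Icc]
  omega

lemma ncard_twoBlockIndex_Icc (k : ℕ) :
    (twoBlockIndex k (Set.Icc (-2) 2)).ncard =
      ∑ x : Fin (k + 1) × Fin (k + 1) × Fin (k + 1) × Fin (k + 1),
        if x.2.1 < x.2.2.1 ∧ x.2.1 ≤ x.1 ∧
          (x.1 + x.2.1 + x.2.2.1 : ℕ) ≤ k + x.2.2.2 + 1 ∧
          (k + x.2.2.2 : ℕ) ≤ x.1 + x.2.1 + x.2.2.1 + 1
        then 1 else 0 := by
  rw [← ncard_setOf_eq_sum, twoBlockIndex]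
  congr! with x
  rw [Set.mem_Icc]
  omega

lemma ncard_oneBlockIndex_Icc_add_le {k : ℕ} (h₅ : 5 ≤ k) (h₉ : k ≤ 9) :
    (oneBlockIndex (2 * k) (Set.Icc (-2) 2)).ncard + k * (k - 3) ≤
      (twoBlockIndex k (Set.Icc (-2) 2)).ncard := by
  simp only [ncard_oneBlockIndex_Icc, ncard_twoBlockIndex_Icc, Fintype.sum_prod_type, ite_and,
    Finset.sum_ite_irrel, Finset.sum_const_zero]
  interval_cases k <;> decide +kernel

lemma sum_ite_lt {N : ℕ} (x : Fin (N + 1)) : ∑ y, (if x < y then 1 else 0) = N - x := by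
  rw [Finset.sum_boole, Finset.filter_lt_eq_Ioi, Fin.card_Ioi, Nat.cast_id, Nat.add_sub_cancel]

lemma sum_ite_le {N : ℕ} (x : Fin (N + 1)) : ∑ y, (if x ≤ y then 1 else 0) = N - x + 1 := by
  rw [Finset.sum_boole, Finset.filter_le_eq_Ici, Fin.card_Ici, Nat.cast_id,
    Nat.sub_add_comm x.is_le]

lemma sum_comp_sub {N : ℕ} (F : ℕ → ℕ) :
    ∑ x : Fin (N + 1), F (N - x) = ∑ x ∈ Finset.range (N + 1), F x := by
  rw [Fin.sum_univ_eq_sum_range fun x => F (N - x)]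
  exact Finset.sum_range_reflect F (N + 1)

lemma ncard_oneBlockIndex_univ (n : ℕ) :
    (oneBlockIndex n Set.univ).ncard = (∑ q : Fin (n + 1), (n - q)) * (n + 1) := by
  calc (oneBlockIndex n Set.univ).ncard
      = ∑ q : Fin (n + 1), ∑ r, ∑ _s : Fin (n + 1), if q < r then 1 else 0 := by
        simp only [oneBlockIndex, Set.mem_univ, and_true, ncard_setOf_eq_sum,
          Fintype.sum_prod_type]
    _ = (∑ q : Fin (n + 1), (n - q)) * (n + 1) := by
        simp only [Finset.sum_const, Finset.card_univ, Fintype.card_fin, smul_eq_mul,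
          mul_comm (n + 1), ← Finset.sum_mul, sum_ite_lt]

lemma two_mul_ncard_oneBlockIndex_univ (n : ℕ) :
    2 * (oneBlockIndex n Set.univ).ncard = n * (n + 1) ^ 2 := by
  have hsum := Finset.sum_range_id_mul_two (n + 1)
  rw [Nat.add_sub_cancel] at hsum
  rw [ncard_oneBlockIndex_univ, sum_comp_sub fun q => q]
  linear_combination (n + 1) * hsum

lemma three_mul_sum_range_add_one_mul (k : ℕ) :
    3 * ∑ j ∈ Finset.range (k + 1), (j + 1) * j = k * (k + 1) * (k + 2) := by
  induction k with
  | zero => rfl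
  | succ k ih => rw [Finset.sum_range_succ, mul_add, ih]; ring

lemma ncard_twoBlockIndex_univ (k : ℕ) :
    (twoBlockIndex k Set.univ).ncard =
      (∑ q : Fin (k + 1), (k - q + 1) * (k - q)) * (k + 1) := by
  calc (twoBlockIndex k Set.univ).ncard
      = ∑ p : Fin (k + 1), ∑ q : Fin (k + 1), ∑ r, ∑ _s : Fin (k + 1),
          if q ≤ p ∧ q < r then 1 else 0 := by
        simp only [twoBlockIndex, Set.mem_univ, true_and, ncard_setOf_eq_sum,
          Fintype.sum_prod_type, and_comm]
    _ = (∑ q : Fin (k + 1), (∑ p, if q ≤ p then 1 else 0) * ∑ r, if q < r then 1 else 0) *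
          (k + 1) := by
        rw [Finset.sum_comm]
        simp only [Finset.sum_const, Finset.card_univ, Fintype.card_fin, smul_eq_mul,
          mul_comm (k + 1), ← Finset.sum_mul, Finset.sum_mul_sum, ite_zero_mul_ite_zero, mul_one]
    _ = (∑ q : Fin (k + 1), (k - q + 1) * (k - q)) * (k + 1) := by
        simp only [sum_ite_lt, sum_ite_le]

lemma three_mul_ncard_twoBlockIndex_univ (k : ℕ) :
    3 * (twoBlockIndex k Set.univ).ncard = k * (k + 1) ^ 2 * (k + 2) := by
  rw [ncard_twoBlockIndex_univ, sum_comp_sub fun q => (q + 1) * q]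
  linear_combination (k + 1) * three_mul_sum_range_add_one_mul k

lemma ncard_oneBlockIndex_univ_add_le {k : ℕ} (hk : 10 ≤ k) :
    (oneBlockIndex (2 * k) Set.univ).ncard + k * (k - 3) ≤ (twoBlockIndex k Set.univ).ncard := by
  obtain ⟨m, rfl⟩ := Nat.exists_eq_add_of_le' hk
  have h₁ := two_mul_ncard_oneBlockIndex_univ (2 * (m + 10))
  have h₂ := three_mul_ncard_twoBlockIndex_univ (m + 10)
  rw [Nat.add_sub_assoc (by norm_num)]
  linarith [Nat.zero_le (m ^ 2), Nat.zero_le (m ^ 3), Nat.zero_le (m ^ 4)]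

end Counting

theorem pow_add_le_finrank_quotient_diagIdeal {k : ℕ} (hk : k ≠ 4) :
    (2 * (2 * k) + 1) ^ (2 * k) + k * (k - 3) ≤
      finrank ℂ (MvPolynomial (Fin (2 * k) ⊕ Fin (2 * k)) ℂ ⧸ diagIdeal (2 * k)) := by
  rcases le_or_gt k 3 with h₃ | h₃
  · simpa only [Nat.sub_eq_zero_of_le h₃, mul_zero, add_zero] using
      pow_le_finrank_quotient_diagIdeal (2 * k)
  · obtain ⟨S, hS⟩ : ∃ S, (oneBlockIndex (2 * k) S).ncard + k * (k - 3) ≤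
        (twoBlockIndex k S).ncard := by
      rcases le_or_gt k 9 with h₉ | h₁₀
      · exact ⟨_, ncard_oneBlockIndex_Icc_add_le (by omega) h₉⟩
      · exact ⟨_, ncard_oneBlockIndex_univ_add_le h₁₀⟩
    have hk₀ : 0 < k := by omega
    linarith [pow_add_ncard_twoBlockIndex_le hk₀ S]

end DiagCoinv

theorem dim_diag_coinv_ge_of_mod_four_eq_two_general (n : ℕ) (hn : Even n) (hn₈ : n ≠ 8) :
    (2 * n + 1 : ℤ) ^ n + (n : ℤ) * ((n : ℤ) - 6) / 4 ≤
      (Module.finrank ℂ (MvPolynomial (Fin n ⊕ Fin n) ℂ ⧸ diagIdeal n) : ℤ) := by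
  obtain ⟨k, rfl⟩ := even_iff_exists_two_mul.mp hn
  have hdiv : ((2 * k : ℕ) : ℤ) * ((2 * k : ℕ) - 6) / 4 = k * (k - 3) := by
    refine Int.ediv_eq_of_eq_mul_right (by norm_num) ?_
    push_cast
    ring
  have hle : (k * (k - 3) : ℤ) ≤ (k * (k - 3) : ℕ) := by
    push_cast
    gcongr
    omega
  have hmain := DiagCoinv.pow_add_le_finrank_quotient_diagIdeal (k := k) (by omega)
  rw [hdiv]
  calc _ ≤ (((2 * (2 * k) + 1) ^ (2 * k) + k * (k - 3) : ℕ) : ℤ) := by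
        push_cast at hle ⊢; gcongr
    _ ≤ _ := by exact_mod_cast hmain

/-- If `n` is a positive integer congruent to 2 mod 4, then
`dim_ℂ R_W ≥ (2n+1)^n + n(n-6)/4` for the diagonal coinvariant ring of `W(Bₙ)`. -/
theorem dim_diag_coinv_ge_of_mod_four_eq_two (n : ℕ) (hn : 0 < n) (h2 : n % 4 = 2) :
    ((2 * n + 1 : ℤ)) ^ n + (n : ℤ) * ((n : ℤ) - 6) / 4 ≤
      (Module.finrank ℂ (MvPolynomial (Fin n ⊕ Fin n) ℂ ⧸ diagIdeal n) : ℤ) :=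
  dim_diag_coinv_ge_of_mod_four_eq_two_general n (Nat.even_iff.mpr (by omega)) (by omega)
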